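/- arXiv:1510.05274 — 4 statements merged into one kernel-verified Lean document; each statement's English description precedes it below -/
import Mathlib

section
/- Let α₀ > 0 and β₀ > 0, and let λ > 0. Then the infimum M_λ = inf{ I(f,g) : (f,g) ∈ H¹(ℝ)×H¹(ℝ), ∫_ℝ f(x)² g(x) dx = λ } satisfies 0 < M_λ < ∞. -/
/-!
Lower bound: for `h ∈ H¹(ℝ)` the function `h²` has integrable derivative `2 h h'`, so it vanishes
at `-∞` and `h(x)² = ∫_{-∞}^x 2 h h' ≤ ∫ (h² + h'²)` (`InH1.sq_le`). With
`K = 1 + 1/α₀ + 1/β₀` this gives `sup g² ≤ K I` and `∫ f² ≤ K I`, so that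
`lam = ∫ f² g ≤ √(K I) · K I`, i.e. `lam² ≤ (K I)³`. Hence `K I ≥ min 1 lam²`, a bound that does not
depend on `(f, g)`.

Nonemptiness: `f(x) = exp(-x²)` and a suitable multiple `g = c f` satisfy the constraint.
-/

open MeasureTheory Filter Topology

noncomputable section

/-- Membership in `H¹(ℝ)`: `f` is differentiable with `f` and `f'` square-integrable. -/
def InH1 (f : ℝ → ℝ) : Prop :=
  Differentiable ℝ f ∧ Integrable (fun x => f x ^ 2) ∧ Integrable (fun x => deriv f x ^ 2)

/-- The functional `I(f,g) = ∫ (f'² + g'² + α₀ f² + β₀ g²)`. -/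
def Ifun (α₀ β₀ : ℝ) (f g : ℝ → ℝ) : ℝ :=
  ∫ x : ℝ, (deriv f x ^ 2 + deriv g x ^ 2 + α₀ * f x ^ 2 + β₀ * g x ^ 2)

/-- The set of values `I(f,g)` over pairs in `H¹ × H¹` with `∫ f² g = lam`. -/
def IvalSet (α₀ β₀ lam : ℝ) : Set ℝ :=
  {m | ∃ f g : ℝ → ℝ, InH1 f ∧ InH1 g ∧ (∫ x : ℝ, f x ^ 2 * g x) = lam ∧ Ifun α₀ β₀ f g = m}

/-- `M_lam`, the infimum of `I` subject to the constraint `∫ f² g = lam`. -/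
def Mfun (α₀ β₀ lam : ℝ) : ℝ := sInf (IvalSet α₀ β₀ lam)

/-- One-dimensional Sobolev embedding `H¹(ℝ) ⊆ L^∞(ℝ)`. -/
lemma InH1.sq_le {h : ℝ → ℝ} (hh : InH1 h) (x : ℝ) :
    h x ^ 2 ≤ ∫ y, (h y ^ 2 + deriv h y ^ 2) := by
  obtain ⟨hd, h2, hd2⟩ := hh
  have hder : ∀ y, HasDerivAt (fun y => h y ^ 2) (2 * h y * deriv h y) y := fun y => by
    simpa using (hd y).hasDerivAt.fun_pow 2
  have hsum : Integrable (fun y => h y ^ 2 + deriv h y ^ 2) := h2.add hd2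
  have hint : Integrable (fun y => 2 * h y * deriv h y) := by
    refine hsum.mono' ?_ (ae_of_all _ fun y => ?_)
    · exact ((hd.continuous.measurable.const_mul 2).mul (measurable_deriv h)).aestronglyMeasurable
    · rw [Real.norm_eq_abs, abs_le]
      constructor <;> nlinarith [sq_nonneg (h y + deriv h y), sq_nonneg (h y - deriv h y)]
  have hlim : Tendsto (fun y => h y ^ 2) atBot (𝓝 0) :=
    tendsto_zero_of_hasDerivAt_of_integrableOn_Iic (a := x) (fun y _ => hder y)
      hint.integrableOn h2.integrableOn
  have key := integral_Iic_of_hasDerivAt_of_tendsto' (a := x) (fun y _ => hder y)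
    hint.integrableOn hlim
  rw [sub_zero] at key
  rw [← key]
  calc ∫ y in Set.Iic x, 2 * h y * deriv h y
      ≤ ∫ y in Set.Iic x, (h y ^ 2 + deriv h y ^ 2) :=
        setIntegral_mono hint.integrableOn hsum.integrableOn
          (fun y => by nlinarith [sq_nonneg (h y - deriv h y)])
    _ ≤ ∫ y, (h y ^ 2 + deriv h y ^ 2) :=
        setIntegral_le_integral hsum (ae_of_all _ fun y => by positivity)

lemma Ifun_lower {α₀ β₀ lam : ℝ} (hα : 0 < α₀) (hβ : 0 < β₀) (hlam : 0 < lam) {f g : ℝ → ℝ}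
    (hf : InH1 f) (hg : InH1 g) (hfg : (∫ x : ℝ, f x ^ 2 * g x) = lam) :
    min 1 (lam ^ 2) / (1 + 1 / α₀ + 1 / β₀) ≤ Ifun α₀ β₀ f g := by
  set K := 1 + 1 / α₀ + 1 / β₀ with hK
  have ha : 0 < 1 / α₀ := by positivity
  have hb : 0 < 1 / β₀ := by positivity
  have hKpos : 0 < K := by positivity
  have hKα : 1 ≤ K * α₀ := by
    have : 1 / α₀ * α₀ = 1 := by field_simp
    nlinarith
  have hKβ : 1 ≤ K * β₀ := by
    have : 1 / β₀ * β₀ = 1 := by field_simp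
    nlinarith
  have hK1 : 1 ≤ K := by linarith
  have hI : Integrable
      (fun x => deriv f x ^ 2 + deriv g x ^ 2 + α₀ * f x ^ 2 + β₀ * g x ^ 2) :=
    ((hf.2.2.add hg.2.2).add (hf.2.1.const_mul α₀)).add (hg.2.1.const_mul β₀)
  set u := K * Ifun α₀ β₀ f g with hu
  have hu' : u = ∫ x, K * (deriv f x ^ 2 + deriv g x ^ 2 + α₀ * f x ^ 2 + β₀ * g x ^ 2) := by
    rw [hu, Ifun, integral_const_mul]
  have hf_le : ∫ x, f x ^ 2 ≤ u := by
    rw [hu']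
    refine integral_mono hf.2.1 (hI.const_mul K) fun x => ?_
    have h1 : 0 ≤ K * (deriv f x ^ 2 + deriv g x ^ 2 + β₀ * g x ^ 2) := by positivity
    have h2 := mul_le_mul_of_nonneg_right hKα (sq_nonneg (f x))
    simp only
    linarith
  have hg_le : ∫ x, (g x ^ 2 + deriv g x ^ 2) ≤ u := by
    rw [hu']
    refine integral_mono (hg.2.1.add hg.2.2) (hI.const_mul K) fun x => ?_
    have h1 : 0 ≤ K * (deriv f x ^ 2 + α₀ * f x ^ 2) := by positivity
    have h2 := mul_le_mul_of_nonneg_right hKβ (sq_nonneg (g x))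
    have h3 := mul_le_mul_of_nonneg_right hK1 (sq_nonneg (deriv g x))
    simp only
    linarith
  have hf0 : 0 ≤ ∫ x, f x ^ 2 := integral_nonneg fun x => sq_nonneg _
  have hu0 : 0 ≤ u := hf0.trans hf_le
  have hgs : ∀ x, |g x| ≤ √u := fun x => Real.abs_le_sqrt ((hg.sq_le x).trans hg_le)
  have hlam_le : lam ≤ √u * u := by
    have hfgi : Integrable (fun x => f x ^ 2 * g x) := by
      refine (hf.2.1.const_mul (√u)).mono'
        ((hf.1.continuous.pow 2).mul hg.1.continuous).aestronglyMeasurable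
        (ae_of_all _ fun x => ?_)
      rw [Real.norm_eq_abs, abs_mul, abs_of_nonneg (sq_nonneg (f x)), mul_comm]
      exact mul_le_mul_of_nonneg_right (hgs x) (sq_nonneg _)
    calc lam = ∫ x, f x ^ 2 * g x := hfg.symm
      _ ≤ ∫ x, √u * f x ^ 2 := integral_mono hfgi (hf.2.1.const_mul _) fun x => by
          have := mul_le_mul_of_nonneg_right ((le_abs_self _).trans (hgs x)) (sq_nonneg (f x))
          simp only
          linarith
      _ = √u * ∫ x, f x ^ 2 := integral_const_mul _ _
      _ ≤ √u * u := mul_le_mul_of_nonneg_left hf_le (Real.sqrt_nonneg u)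
  have hcube : lam ^ 2 ≤ u ^ 3 := by
    calc lam ^ 2 ≤ (√u * u) ^ 2 := pow_le_pow_left₀ hlam.le hlam_le 2
      _ = u ^ 3 := by rw [mul_pow, Real.sq_sqrt hu0]; ring
  rw [div_le_iff₀' hKpos]
  rcases le_total 1 u with h1 | h1
  · exact (min_le_left _ _).trans h1
  · exact (min_le_right _ _).trans (hcube.trans (pow_le_of_le_one hu0 h1 (by norm_num)))

lemma inH1_gaussian (c : ℝ) : InH1 (fun x => c * Real.exp (-x ^ 2)) := by
  have hder : ∀ x : ℝ, HasDerivAt (fun x => c * Real.exp (-x ^ 2))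
      (c * (Real.exp (-x ^ 2) * (-(2 * x)))) x := fun x => by
    simpa using (((hasDerivAt_id x).pow 2).neg.exp).const_mul c
  refine ⟨fun x => (hder x).differentiableAt, ?_, ?_⟩
  · refine ((integrable_exp_neg_mul_sq (b := 2) (by norm_num)).const_mul (c ^ 2)).congr
      (ae_of_all _ fun x => ?_)
    simp only
    rw [mul_pow, ← Real.exp_nat_mul]
    congr 2
    push_cast
    ring
  · have h := integrable_rpow_mul_exp_neg_mul_sq (b := 2) (by norm_num) (s := 2) (by norm_num)
    refine (h.const_mul (4 * c ^ 2)).congr (ae_of_all _ fun x => ?_)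
    have he : Real.exp (-2 * x ^ 2) = Real.exp (-x ^ 2) ^ 2 := by
      rw [← Real.exp_nat_mul]
      congr 1
      push_cast
      ring
    simp only [(hder x).deriv, he, Real.rpow_two]
    ring

lemma IvalSet_nonempty (α₀ β₀ lam : ℝ) : (IvalSet α₀ β₀ lam).Nonempty := by
  -- `J = ∫ exp(-3x²)` is the value of the constraint for `f = g = exp(-x²)`.
  set J : ℝ := √(Real.pi / 3) with hJ
  have hJpos : 0 < J := Real.sqrt_pos.2 (by positivity)
  refine ⟨_, fun x => 1 * Real.exp (-x ^ 2), fun x => lam / J * Real.exp (-x ^ 2),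
    inH1_gaussian _, inH1_gaussian _, ?_, rfl⟩
  have : ∀ x : ℝ, (1 * Real.exp (-x ^ 2)) ^ 2 * (lam / J * Real.exp (-x ^ 2))
      = lam / J * Real.exp (-3 * x ^ 2) := fun x => by
    have he : Real.exp (-3 * x ^ 2) = Real.exp (-x ^ 2) ^ 3 := by
      rw [← Real.exp_nat_mul]
      congr 1
      push_cast
      ring
    rw [he]
    ring
  simp only [this]
  rw [integral_const_mul, integral_gaussian, ← hJ]
  field_simp

/-- `0 < M_λ < ∞`: the constraint set is nonempty (so the infimum is a
finite real number) and the infimum is strictly positive. -/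
theorem Mlam_pos_and_finite (α₀ β₀ lam : ℝ) (hα : 0 < α₀) (hβ : 0 < β₀) (hlam : 0 < lam) :
    (IvalSet α₀ β₀ lam).Nonempty ∧ 0 < Mfun α₀ β₀ lam := by
  have hne := IvalSet_nonempty α₀ β₀ lam
  refine ⟨hne, lt_of_lt_of_le ?_ (le_csInf hne (a := min 1 (lam ^ 2) / (1 + 1 / α₀ + 1 / β₀)) ?_)⟩
  · have : 0 < min 1 (lam ^ 2) := lt_min one_pos (by positivity)
    positivity
  · rintro m ⟨f, g, hf, hg, hfg, rfl⟩
    exact Ifun_lower hα hβ hlam hf hg hfg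
end
end

section
/- Let α₀ > 0, β₀ > 0 and λ > 0. For every sequence {(f_n, g_n)} in H¹(ℝ)×H¹(ℝ) satisfying lim_{n→∞} ∫_ℝ f_n² g_n dx = λ and lim_{n→∞} I(f_n, g_n) = M_λ, there exist a subsequence {(f_{n_k}, g_{n_k})}, a sequence of real numbers {y_k}, and a pair (φ,ψ) ∈ H¹(ℝ)×H¹(ℝ) with ∫_ℝ φ² ψ dx = λ and I(φ,ψ) = M_λ, such that f_{n_k}(· + y_k) → φ and g_{n_k}(· + y_k) → ψ strongly in H¹(ℝ), i.e. ‖f_{n_k}(·+y_k) − φ‖_{L²} + ‖f′_{n_k}(·+y_k) − φ′‖_{L²} → 0 and ‖g_{n_k}(·+y_k) − ψ‖_{L²} + ‖g′_{n_k}(·+y_k) − ψ′‖_{L²} → 0 as k → ∞. -/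
/-!
Scaling a pair `(f, g)` by `s` multiplies the energy by `s²` and the constraint by `s³`. Hence the
definition of `M = Mfun α₀ β₀ lam` amounts to the sharp inequality
`M³ (∫ f² g)² ≤ lam² I(f, g)³` for all pairs, and the exponent `2/3` relating the two sides makes the
problem strictly subadditive.

Limits are taken in the class `WeakH1` of primitives of `L²` functions, since `InH1` asks for
differentiability at every point and is not closed under weak limits. The sharp inequality passes to
`WeakH1` through Steklov averages (`sharp_ineq`). Along a minimizing sequence `|g n|` cannot tend to
zero uniformly, as `∫ f² |g| ≤ sup |g| ∫ f²`; translating by points where `|g n|` stays bounded below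
(`exists_centers`) produces a weak limit `(φ, ψ)` with `ψ ≠ 0`. Energy and constraint split
asymptotically into the contribution of the limit and that of the remainder (`sq_split`,
`cubic_split`). Applying the sharp inequality to both parts, strict subadditivity
(`dichotomy_scalar`) leaves no energy in the remainder, which is strong convergence to a minimizer
(`compact_of_centered`).

The minimizer so found is only known to lie in `WeakH1`. By the first-order condition for the sharp
inequality it solves weakly the Euler–Lagrange system, whose right-hand side is continuous, and the
lemma of du Bois-Reymond makes it differentiable everywhere (`minimizer_regular`).
-/

open MeasureTheory Filter Topology

noncomputable section

open Set

/-! ### Cauchy–Schwarz and the space of pairs (function, weak derivative) -/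

lemma integrable_mul_of_sq {X : Type*} [MeasurableSpace X] {μ : Measure X} {f g : X → ℝ}
    (hf : AEStronglyMeasurable f μ) (hg : AEStronglyMeasurable g μ)
    (hf2 : Integrable (fun x => f x ^ 2) μ) (hg2 : Integrable (fun x => g x ^ 2) μ) :
    Integrable (fun x => f x * g x) μ :=
  MemLp.integrable_mul ((memLp_two_iff_integrable_sq hf).2 hf2)
    ((memLp_two_iff_integrable_sq hg).2 hg2)

lemma integrable_add_sq {X : Type*} [MeasurableSpace X] {μ : Measure X} {f g : X → ℝ}
    (hf : AEStronglyMeasurable f μ) (hg : AEStronglyMeasurable g μ)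
    (hf2 : Integrable (fun x => f x ^ 2) μ) (hg2 : Integrable (fun x => g x ^ 2) μ) :
    Integrable (fun x => (f x + g x) ^ 2) μ := by
  have h := (hf2.add ((integrable_mul_of_sq hf hg hf2 hg2).const_mul 2)).add hg2
  refine h.congr (Eventually.of_forall fun x => ?_)
  simp only [Pi.add_apply]; ring

lemma integral_add_sq_expand {X : Type*} [MeasurableSpace X] {μ : Measure X} {f g : X → ℝ}
    (hf : AEStronglyMeasurable f μ) (hg : AEStronglyMeasurable g μ)
    (hf2 : Integrable (fun x => f x ^ 2) μ) (hg2 : Integrable (fun x => g x ^ 2) μ) (t : ℝ) :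
    ∫ x, (f x + t * g x) ^ 2 ∂μ
      = ∫ x, f x ^ 2 ∂μ + 2 * t * ∫ x, f x * g x ∂μ + t ^ 2 * ∫ x, g x ^ 2 ∂μ := by
  have hfg := integrable_mul_of_sq hf hg hf2 hg2
  rw [← integral_const_mul, ← integral_const_mul, ← integral_add hf2 (hfg.const_mul _),
    ← integral_add (by exact hf2.add (hfg.const_mul _)) (hg2.const_mul _)]
  congr 1; ext x; ring

lemma integral_mul_sq_le {X : Type*} [MeasurableSpace X] {μ : Measure X} {f g : X → ℝ}
    (hf : AEStronglyMeasurable f μ) (hg : AEStronglyMeasurable g μ)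
    (hf2 : Integrable (fun x => f x ^ 2) μ) (hg2 : Integrable (fun x => g x ^ 2) μ) :
    (∫ x, f x * g x ∂μ) ^ 2 ≤ (∫ x, f x ^ 2 ∂μ) * ∫ x, g x ^ 2 ∂μ := by
  have h : ∀ t : ℝ, 0 ≤ (∫ x, g x ^ 2 ∂μ) * (t * t) + (2 * ∫ x, f x * g x ∂μ) * t
      + ∫ x, f x ^ 2 ∂μ := by
    intro t
    have h1 := integral_add_sq_expand hf hg hf2 hg2 t
    have h2 : 0 ≤ ∫ x, (f x + t * g x) ^ 2 ∂μ := integral_nonneg fun x => sq_nonneg _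
    nlinarith
  have := discrim_le_zero h
  unfold discrim at this
  nlinarith

/-- `f ∈ H¹(ℝ)` with weak derivative `v`: `f` is a primitive of `v`, and both are in `L²`. In contrast
to `InH1`, `f` need not be differentiable everywhere, so this class is closed under weak limits.
The derivative `v` is asked to be Borel measurable, which a change on a null set achieves. -/
structure WeakH1 (f v : ℝ → ℝ) : Prop where
  meas : Measurable v
  sqf : Integrable (fun x => f x ^ 2)
  sqv : Integrable (fun x => v x ^ 2)
  ftc : ∀ a b : ℝ, ∫ x in a..b, v x = f b - f a

lemma locallyIntegrable_of_sq {v : ℝ → ℝ} (hm : Measurable v)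
    (h : Integrable (fun x => v x ^ 2)) : LocallyIntegrable v :=
  ((memLp_two_iff_integrable_sq hm.aestronglyMeasurable).2 h).locallyIntegrable (by norm_num)

lemma intervalIntegrable_of_sq {v : ℝ → ℝ} (hm : Measurable v)
    (h : Integrable (fun x => v x ^ 2)) (a b : ℝ) : IntervalIntegrable v volume a b :=
  ((locallyIntegrable_of_sq hm h).integrableOn_isCompact isCompact_uIcc).intervalIntegrable

/-- Cauchy–Schwarz on the interval `(a, b]`, against the constant function. -/
lemma sq_intervalIntegral_le {v : ℝ → ℝ} (hm : Measurable v)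
    (h : Integrable (fun x => v x ^ 2)) {a b : ℝ} (hab : a ≤ b) :
    (∫ x in a..b, v x) ^ 2 ≤ (b - a) * ∫ x in a..b, v x ^ 2 := by
  rw [intervalIntegral.integral_of_le hab, intervalIntegral.integral_of_le hab]
  have := integral_mul_sq_le (μ := volume.restrict (Ioc a b)) (f := fun _ => (1 : ℝ)) (g := v)
    aestronglyMeasurable_const hm.aestronglyMeasurable (integrable_const _) h.integrableOn
  simpa [hab] using this

lemma intervalIntegral_sq_le {v : ℝ → ℝ} (h : Integrable (fun x => v x ^ 2)) {a b : ℝ}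
    (hab : a ≤ b) : ∫ x in a..b, v x ^ 2 ≤ ∫ x, v x ^ 2 := by
  rw [intervalIntegral.integral_of_le hab]
  exact setIntegral_le_integral h (Eventually.of_forall fun x => sq_nonneg _)

namespace WeakH1

variable {f v g w : ℝ → ℝ}

lemma holder (h : WeakH1 f v) {a b : ℝ} (hab : a ≤ b) :
    (f b - f a) ^ 2 ≤ (b - a) * ∫ x, v x ^ 2 := by
  rw [← h.ftc a b]
  exact (sq_intervalIntegral_le h.meas h.sqv hab).trans
    (mul_le_mul_of_nonneg_left (intervalIntegral_sq_le h.sqv hab) (by linarith))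

lemma continuous (h : WeakH1 f v) : Continuous f := by
  have : f = fun x => f 0 + ∫ t in (0 : ℝ)..x, v t := by
    ext x; rw [h.ftc]; ring
  rw [this]
  exact continuous_const.add
    (intervalIntegral.continuous_primitive (intervalIntegrable_of_sq h.meas h.sqv) 0)

lemma aesm (h : WeakH1 f v) : AEStronglyMeasurable f := h.continuous.aestronglyMeasurable

lemma aesmv (h : WeakH1 f v) : AEStronglyMeasurable v := h.meas.aestronglyMeasurable

/-- The Sobolev embedding `H¹ ⊂ L^∞`. -/
lemma sup_bound (h : WeakH1 f v) (x : ℝ) : f x ^ 2 ≤ 2 * (∫ t, f t ^ 2) + 2 * ∫ t, v t ^ 2 := by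
  -- compare `f x` with `f y` and average over `y ∈ [x, x + 1]`
  have key : ∀ y ∈ Icc x (x + 1), f x ^ 2 ≤ 2 * f y ^ 2 + 2 * ∫ t, v t ^ 2 := by
    intro y hy
    have h1 := h.holder hy.1
    have h2 : (y - x) * (∫ t, v t ^ 2) ≤ 1 * ∫ t, v t ^ 2 :=
      mul_le_mul_of_nonneg_right (by linarith [hy.2]) (integral_nonneg fun _ => sq_nonneg _)
    nlinarith [sq_nonneg (2 * f y - f x)]
  have hc := h.continuous
  have h3 : ∫ _y in x..(x + 1), f x ^ 2 ≤ ∫ y in x..(x + 1), (2 * f y ^ 2 + 2 * ∫ t, v t ^ 2) :=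
    intervalIntegral.integral_mono_on (by linarith) (by simp)
      (Continuous.intervalIntegrable (by fun_prop) _ _) key
  rw [intervalIntegral.integral_add (Continuous.intervalIntegrable (by fun_prop) _ _) (by simp),
    intervalIntegral.integral_const_mul] at h3
  simp only [intervalIntegral.integral_const, add_sub_cancel_left, one_smul] at h3
  linarith [intervalIntegral_sq_le h.sqf (show x ≤ x + 1 by linarith)]

lemma of_inH1 (h : InH1 f) : WeakH1 f (deriv f) where
  meas := measurable_deriv f
  sqf := h.2.1
  sqv := h.2.2
  ftc a b := intervalIntegral.integral_eq_sub_of_hasDerivAt (fun x _ => (h.1 x).hasDerivAt)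
    (intervalIntegrable_of_sq (measurable_deriv f) h.2.2 a b)

lemma const_mul (h : WeakH1 f v) (c : ℝ) : WeakH1 (fun x => c * f x) (fun x => c * v x) where
  meas := h.meas.const_mul c
  sqf := by simpa [mul_pow] using h.sqf.const_mul (c ^ 2)
  sqv := by simpa [mul_pow] using h.sqv.const_mul (c ^ 2)
  ftc a b := by rw [intervalIntegral.integral_const_mul, h.ftc]; ring

lemma add (h : WeakH1 f v) (k : WeakH1 g w) :
    WeakH1 (fun x => f x + g x) (fun x => v x + w x) where
  meas := h.meas.add k.meas
  sqf := integrable_add_sq h.aesm k.aesm h.sqf k.sqf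
  sqv := integrable_add_sq h.aesmv k.aesmv h.sqv k.sqv
  ftc a b := by
    rw [intervalIntegral.integral_add (intervalIntegrable_of_sq h.meas h.sqv a b)
      (intervalIntegrable_of_sq k.meas k.sqv a b), h.ftc, k.ftc]; ring

lemma sub (h : WeakH1 f v) (k : WeakH1 g w) :
    WeakH1 (fun x => f x - g x) (fun x => v x - w x) := by
  simpa [sub_eq_add_neg] using h.add (k.const_mul (-1))

lemma comp_add (h : WeakH1 f v) (y : ℝ) :
    WeakH1 (fun x => f (x + y)) (fun x => v (x + y)) where
  meas := h.meas.comp (measurable_id.add_const y)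
  sqf := h.sqf.comp_add_right y
  sqv := h.sqv.comp_add_right y
  ftc a b := by rw [intervalIntegral.integral_comp_add_right, h.ftc]

/-- Replacing the derivative by another representative. -/
lemma congr_ae (h : WeakH1 f v) (hw : Measurable w) (hvw : v =ᵐ[volume] w) : WeakH1 f w where
  meas := hw
  sqf := h.sqf
  sqv := h.sqv.congr (hvw.mono fun x hx => by simp only [hx])
  ftc a b := by
    rw [← h.ftc a b]
    exact intervalIntegral.integral_congr_ae (hvw.mono fun x hx _ => hx.symm)

lemma integrable_mul_bdd {u : ℝ → ℝ} (hu : Integrable u) (hz : WeakH1 f v) :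
    Integrable (fun x => u x * f x) := by
  obtain ⟨C, hC⟩ : ∃ C, ∀ x, ‖f x‖ ≤ C := by
    refine ⟨Real.sqrt (2 * (∫ t, f t ^ 2) + 2 * ∫ t, v t ^ 2), fun x => ?_⟩
    exact Real.abs_le_sqrt (hz.sup_bound x)
  exact hu.mul_bdd (c := C) hz.aesm (Eventually.of_forall hC)

lemma integrable_cubic (h : WeakH1 f v) (k : WeakH1 g w) :
    Integrable (fun x => f x ^ 2 * g x) := integrable_mul_bdd h.sqf k

end WeakH1

/-! ### Steklov averages and the sharp inequality on the weak space -/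

/-- The energy `∫ (v² + w² + α f² + β g²)`, with the derivatives as separate arguments. -/
def En (α β : ℝ) (f v g w : ℝ → ℝ) : ℝ :=
  (∫ x, v x ^ 2) + (∫ x, w x ^ 2) + α * (∫ x, f x ^ 2) + β * ∫ x, g x ^ 2

lemma Ifun_eq_En {α β : ℝ} {f g : ℝ → ℝ} (hf : InH1 f) (hg : InH1 g) :
    Ifun α β f g = En α β f (deriv f) g (deriv g) := by
  unfold Ifun En
  have h1 := hf.2.2
  have h2 := hg.2.2
  have h3 := hf.2.1.const_mul α
  have h4 := hg.2.1.const_mul β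
  rw [integral_add (by exact (h1.add h2).add h3) h4, integral_add (by exact h1.add h2) h3,
    integral_add h1 h2, integral_const_mul, integral_const_mul]

lemma En_nonneg {α β : ℝ} (hα : 0 ≤ α) (hβ : 0 ≤ β) (f v g w : ℝ → ℝ) : 0 ≤ En α β f v g w := by
  have h (u : ℝ → ℝ) : 0 ≤ ∫ x, u x ^ 2 := integral_nonneg fun _ => sq_nonneg _
  have := h v; have := h w; have := mul_nonneg hα (h f); have := mul_nonneg hβ (h g)
  unfold En; positivity

/-- The average of `f` over `[x, x + ε]`. -/
def steklov (ε : ℝ) (f : ℝ → ℝ) (x : ℝ) : ℝ := ε⁻¹ * ∫ s in (0 : ℝ)..ε, f (x + s)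

lemma steklov_sq_le {u : ℝ → ℝ} (hm : Measurable u) (h : Integrable (fun x => u x ^ 2)) {ε : ℝ}
    (hε : 0 < ε) (x : ℝ) : steklov ε u x ^ 2 ≤ ε⁻¹ * ∫ s in (0 : ℝ)..ε, u (x + s) ^ 2 := by
  have h1 := sq_intervalIntegral_le (v := fun s => u (x + s)) (hm.comp (measurable_const_add x))
    (h.comp_add_left x) hε.le
  unfold steklov
  rw [mul_pow]
  calc ε⁻¹ ^ 2 * (∫ s in (0 : ℝ)..ε, u (x + s)) ^ 2
      ≤ ε⁻¹ ^ 2 * ((ε - 0) * ∫ s in (0 : ℝ)..ε, u (x + s) ^ 2) := by gcongr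
    _ = _ := by field_simp; ring

lemma steklov_sq_majorant {u : ℝ → ℝ} (hm : Measurable u) (h : Integrable (fun x => u x ^ 2))
    {ε : ℝ} (hε : 0 < ε) :
    Integrable (fun x => ε⁻¹ * ∫ s in (0 : ℝ)..ε, u (x + s) ^ 2) ∧
      ∫ x, ε⁻¹ * ∫ s in (0 : ℝ)..ε, u (x + s) ^ 2 = ∫ x, u x ^ 2 := by
  have hprod : Integrable (Function.uncurry fun x s : ℝ => u (x + s) ^ 2)
      ((volume : Measure ℝ).prod (volume.restrict (Ioc 0 ε))) := by
    rw [integrable_prod_iff']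
    · refine ⟨Eventually.of_forall fun s => h.comp_add_right s, ?_⟩
      have : (fun s => ∫ x, ‖Function.uncurry (fun x s : ℝ => u (x + s) ^ 2) (x, s)‖)
          = fun _ => ∫ x, u x ^ 2 := by
        ext s
        simp only [Function.uncurry_apply_pair, norm_pow, Real.norm_eq_abs, sq_abs]
        exact integral_add_right_eq_self (fun x => u x ^ 2) s
      rw [this]
      exact integrable_const _
    · exact ((hm.comp (measurable_fst.add measurable_snd)).pow_const 2).aestronglyMeasurable
  simp only [intervalIntegral.integral_of_le hε.le]
  refine ⟨hprod.integral_prod_left.const_mul _, ?_⟩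
  rw [integral_const_mul, integral_integral_swap hprod]
  have : ∀ s : ℝ, ∫ x, u (x + s) ^ 2 = ∫ x, u x ^ 2 :=
    fun s => integral_add_right_eq_self (fun x => u x ^ 2) s
  simp only [this]
  simp [hε.le]
  field_simp

lemma steklov_L2 {u : ℝ → ℝ} (hm : Measurable u) (h : Integrable (fun x => u x ^ 2))
    {ε : ℝ} (hε : 0 < ε) (hS : Measurable (steklov ε u)) :
    Integrable (fun x => steklov ε u x ^ 2) ∧ ∫ x, steklov ε u x ^ 2 ≤ ∫ x, u x ^ 2 := by
  obtain ⟨h1, h2⟩ := steklov_sq_majorant hm h hε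
  have h3 : Integrable (fun x => steklov ε u x ^ 2) :=
    h1.mono' (hS.pow_const 2).aestronglyMeasurable (Eventually.of_forall fun x => by
      rw [Real.norm_eq_abs, abs_of_nonneg (sq_nonneg _)]; exact steklov_sq_le hm h hε x)
  exact ⟨h3, h2 ▸ integral_mono h3 h1 fun x => steklov_sq_le hm h hε x⟩

namespace WeakH1

variable {f v g w : ℝ → ℝ}

lemma hasDerivAt_steklov (h : WeakH1 f v) (ε x : ℝ) :
    HasDerivAt (steklov ε f) (steklov ε v x) x := by
  have hc := h.continuous
  have hF : ∀ y, HasDerivAt (fun y => ∫ t in (0 : ℝ)..y, f t) (f y) y := fun y =>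
    intervalIntegral.integral_hasDerivAt_right (hc.intervalIntegrable _ _)
      (hc.stronglyMeasurableAtFilter _ _) hc.continuousAt
  have h1 : steklov ε f = fun x => ε⁻¹ * ((∫ t in (0 : ℝ)..(x + ε), f t) - ∫ t in (0 : ℝ)..x, f t) := by
    ext x
    unfold steklov
    rw [intervalIntegral.integral_interval_sub_left (hc.intervalIntegrable _ _)
      (hc.intervalIntegrable _ _), intervalIntegral.integral_comp_add_left]
    simp
  have h2 : steklov ε v x = ε⁻¹ * (f (x + ε) - f x) := by
    unfold steklov
    rw [intervalIntegral.integral_comp_add_left, h.ftc]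
    simp
  rw [h1, h2]
  exact (((hF (x + ε)).comp_add_const x ε).sub (hF x)).const_mul _

lemma deriv_steklov (h : WeakH1 f v) (ε : ℝ) : deriv (steklov ε f) = steklov ε v := by
  ext x; exact (h.hasDerivAt_steklov ε x).deriv

lemma differentiable_steklov (h : WeakH1 f v) (ε : ℝ) : Differentiable ℝ (steklov ε f) :=
  fun x => (h.hasDerivAt_steklov ε x).differentiableAt

lemma steklov_L2_fun (h : WeakH1 f v) {ε : ℝ} (hε : 0 < ε) :
    Integrable (fun x => steklov ε f x ^ 2) ∧ ∫ x, steklov ε f x ^ 2 ≤ ∫ x, f x ^ 2 :=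
  steklov_L2 h.continuous.measurable h.sqf hε (h.differentiable_steklov ε).continuous.measurable

lemma steklov_L2_deriv (h : WeakH1 f v) {ε : ℝ} (hε : 0 < ε) :
    Integrable (fun x => deriv (steklov ε f) x ^ 2) ∧
      ∫ x, deriv (steklov ε f) x ^ 2 ≤ ∫ x, v x ^ 2 := by
  rw [h.deriv_steklov]
  exact steklov_L2 h.meas h.sqv hε (h.deriv_steklov ε ▸ measurable_deriv _)

lemma inH1_steklov (h : WeakH1 f v) {ε : ℝ} (hε : 0 < ε) : InH1 (steklov ε f) :=
  ⟨h.differentiable_steklov ε, (h.steklov_L2_fun hε).1, (h.steklov_L2_deriv hε).1⟩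

lemma steklov_sub_le (h : WeakH1 f v) {ε δ : ℝ} (hε : 0 < ε) (hδ : 0 ≤ δ)
    (hb : ε * (∫ x, v x ^ 2) ≤ δ ^ 2) (x : ℝ) : |steklov ε f x - f x| ≤ δ := by
  have hc := h.continuous
  have h1 : steklov ε f x - f x = ε⁻¹ * ∫ s in (0 : ℝ)..ε, (f (x + s) - f x) := by
    unfold steklov
    rw [intervalIntegral.integral_sub (Continuous.intervalIntegrable (by fun_prop) _ _) (by simp)]
    simp; field_simp
  have h2 : ‖∫ s in (0 : ℝ)..ε, (f (x + s) - f x)‖ ≤ δ * |ε - 0| := by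
    apply intervalIntegral.norm_integral_le_of_norm_le_const
    intro s hs
    rw [uIoc_of_le hε.le] at hs
    apply abs_le_of_sq_le_sq _ hδ
    have h3 := h.holder (show x ≤ x + s by linarith [hs.1])
    have h4 : (x + s - x) * (∫ x, v x ^ 2) ≤ ε * ∫ x, v x ^ 2 :=
      mul_le_mul_of_nonneg_right (by linarith [hs.2]) (integral_nonneg fun _ => sq_nonneg _)
    linarith
  rw [h1, abs_mul, abs_of_pos (inv_pos.2 hε), inv_mul_le_iff₀ hε]
  rw [Real.norm_eq_abs, sub_zero, abs_of_pos hε] at h2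
  linarith

end WeakH1

/-- If `F` is uniformly close to `f` and `G` to `g`, with controlled `L²` norms, the cubic
functionals are close. -/
lemma cubic_close {f v g w F V G W : ℝ → ℝ} (hf : WeakH1 f v) (hg : WeakH1 g w) (hF : WeakH1 F V)
    (hG : WeakH1 G W) (hFf : ∫ x, F x ^ 2 ≤ ∫ x, f x ^ 2) (hGg : ∫ x, G x ^ 2 ≤ ∫ x, g x ^ 2)
    {δ : ℝ} (hδ : 0 ≤ δ) (h1 : ∀ x, |F x - f x| ≤ δ) (h2 : ∀ x, |G x - g x| ≤ δ) :
    |(∫ x, F x ^ 2 * G x) - ∫ x, f x ^ 2 * g x| ≤ δ * (2 * (∫ x, f x ^ 2) + ∫ x, g x ^ 2) := by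
  rw [← integral_sub (hF.integrable_cubic hG) (hf.integrable_cubic hg), ← Real.norm_eq_abs]
  have hb : ∀ x, ‖F x ^ 2 * G x - f x ^ 2 * g x‖
      ≤ δ * ((1 / 2) * F x ^ 2 + (3 / 2) * f x ^ 2 + G x ^ 2) := by
    intro x
    have e : F x ^ 2 * G x - f x ^ 2 * g x
        = (F x - f x) * ((F x + f x) * G x) + f x ^ 2 * (G x - g x) := by ring
    have e1 : |(F x + f x) * G x| ≤ (1 / 2) * F x ^ 2 + (1 / 2) * f x ^ 2 + G x ^ 2 := by
      rw [abs_le]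
      constructor <;> nlinarith [sq_nonneg (F x + G x), sq_nonneg (f x + G x),
        sq_nonneg (F x - G x), sq_nonneg (f x - G x)]
    rw [Real.norm_eq_abs, e]
    calc |(F x - f x) * ((F x + f x) * G x) + f x ^ 2 * (G x - g x)|
        ≤ |(F x - f x) * ((F x + f x) * G x)| + |f x ^ 2 * (G x - g x)| := abs_add_le _ _
      _ = |F x - f x| * |(F x + f x) * G x| + f x ^ 2 * |G x - g x| := by
          rw [abs_mul, abs_mul (f x ^ 2), abs_of_nonneg (sq_nonneg (f x))]
      _ ≤ δ * ((1 / 2) * F x ^ 2 + (1 / 2) * f x ^ 2 + G x ^ 2) + f x ^ 2 * δ := by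
          gcongr
          · exact h1 x
          · exact h2 x
      _ = _ := by ring
  have i1 := hF.sqf.const_mul (1 / 2)
  have i2 := hf.sqf.const_mul (3 / 2)
  have := norm_integral_le_of_norm_le (((i1.add i2).add hG.sqf).const_mul δ)
    (Eventually.of_forall hb)
  refine this.trans ?_
  rw [integral_const_mul]
  simp only [Pi.add_apply]
  rw [integral_add (by exact i1.add i2) hG.sqf, integral_add i1 i2, integral_const_mul,
    integral_const_mul]
  gcongr
  linarith

lemma exists_real_cube_root {c : ℝ} (hc : c ≠ 0) : ∃ s : ℝ, s ^ 3 = c := by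
  rcases lt_or_gt_of_ne hc with h | h
  · refine ⟨-((-c) ^ ((1 : ℝ) / 3)), ?_⟩
    have : ((-c) ^ ((1 : ℝ) / 3)) ^ 3 = -c := by
      rw [← Real.rpow_natCast, ← Real.rpow_mul (by linarith)]; norm_num
    rw [Odd.neg_pow (by decide), this]; ring
  · refine ⟨c ^ ((1 : ℝ) / 3), ?_⟩
    rw [← Real.rpow_natCast, ← Real.rpow_mul (by linarith)]; norm_num

lemma bddBelow_IvalSet {α β lam : ℝ} (hα : 0 < α) (hβ : 0 < β) : BddBelow (IvalSet α β lam) := by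
  refine ⟨0, ?_⟩
  rintro m ⟨f, g, hf, hg, -, rfl⟩
  rw [Ifun_eq_En hf hg]
  exact En_nonneg hα.le hβ.le _ _ _ _

lemma Mfun_nonneg {α β lam : ℝ} (hα : 0 < α) (hβ : 0 < β) : 0 ≤ Mfun α β lam := by
  apply Real.sInf_nonneg
  rintro m ⟨f, g, hf, hg, -, rfl⟩
  rw [Ifun_eq_En hf hg]
  exact En_nonneg hα.le hβ.le _ _ _ _

/-- Homogeneity turns the definition of the constrained infimum into an inequality valid for all
pairs: `(s f, s g)` multiplies the energy by `s²` and the constraint by `s³`. -/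
lemma sharp_ineq_inH1 {α β lam : ℝ} (hα : 0 < α) (hβ : 0 < β) (hlam : 0 < lam) {f g : ℝ → ℝ}
    (hf : InH1 f) (hg : InH1 g) :
    Mfun α β lam ^ 3 * (∫ x, f x ^ 2 * g x) ^ 2
      ≤ lam ^ 2 * En α β f (deriv f) g (deriv g) ^ 3 := by
  have hE := En_nonneg hα.le hβ.le f (deriv f) g (deriv g)
  by_cases hN : ∫ x, f x ^ 2 * g x = 0
  · rw [hN]; simp only [ne_eq, OfNat.ofNat_ne_zero, not_false_eq_true, zero_pow, mul_zero]
    positivity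
  obtain ⟨s, hs⟩ := exists_real_cube_root (div_ne_zero hlam.ne' hN)
  have hs_inv : s ^ 3 * (∫ x, f x ^ 2 * g x) = lam := by rw [hs]; field_simp
  have sm : ∀ {u : ℝ → ℝ}, InH1 u → InH1 (fun x => s * u x) := fun {u} hu => by
    have hd : deriv (fun x => s * u x) = fun x => s * deriv u x := by
      ext x; exact deriv_const_mul s (hu.1 x)
    refine ⟨hu.1.const_mul s, ?_, ?_⟩
    · simpa [mul_pow] using hu.2.1.const_mul (s ^ 2)
    · rw [hd]; simpa [mul_pow] using hu.2.2.const_mul (s ^ 2)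
  have hM : Mfun α β lam ≤ Ifun α β (fun x => s * f x) (fun x => s * g x) := by
    refine csInf_le (bddBelow_IvalSet hα hβ) ⟨_, _, sm hf, sm hg, ?_, rfl⟩
    rw [← hs_inv, ← integral_const_mul]
    congr 1; ext x; ring
  have hI : Ifun α β (fun x => s * f x) (fun x => s * g x)
      = s ^ 2 * En α β f (deriv f) g (deriv g) := by
    rw [Ifun_eq_En (sm hf) (sm hg)]
    have hdf : deriv (fun x => s * f x) = fun x => s * deriv f x := by
      ext x; exact deriv_const_mul s (hf.1 x)
    have hdg : deriv (fun x => s * g x) = fun x => s * deriv g x := by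
      ext x; exact deriv_const_mul s (hg.1 x)
    rw [hdf, hdg]
    unfold En
    simp only [mul_pow, integral_const_mul]
    ring
  rw [hI] at hM
  have h3 := pow_le_pow_left₀ (Mfun_nonneg hα hβ) hM 3
  have h4 := mul_le_mul_of_nonneg_right h3 (sq_nonneg (∫ x, f x ^ 2 * g x))
  calc _ ≤ _ := h4
    _ = (s ^ 3 * (∫ x, f x ^ 2 * g x)) ^ 2 * En α β f (deriv f) g (deriv g) ^ 3 := by ring
    _ = _ := by rw [hs_inv]

/-- The sharp inequality extends to the weak class: Steklov averages lie in `InH1`, do not increase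
the energy, and converge uniformly. -/
lemma sharp_ineq {α β lam : ℝ} (hα : 0 < α) (hβ : 0 < β) (hlam : 0 < lam) {f v g w : ℝ → ℝ}
    (hf : WeakH1 f v) (hg : WeakH1 g w) :
    Mfun α β lam ^ 3 * (∫ x, f x ^ 2 * g x) ^ 2 ≤ lam ^ 2 * En α β f v g w ^ 3 := by
  set A := (∫ x, v x ^ 2) + ∫ x, w x ^ 2 with hA
  have hv : 0 ≤ ∫ x, v x ^ 2 := integral_nonneg fun _ => sq_nonneg _
  have hw : 0 ≤ ∫ x, w x ^ 2 := integral_nonneg fun _ => sq_nonneg _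
  have step : ∀ n : ℕ, ∃ N : ℝ,
      |N - ∫ x, f x ^ 2 * g x| ≤ 1 / ((n : ℝ) + 1) * (2 * (∫ x, f x ^ 2) + ∫ x, g x ^ 2) ∧
      Mfun α β lam ^ 3 * N ^ 2 ≤ lam ^ 2 * En α β f v g w ^ 3 := by
    intro n
    set δ : ℝ := 1 / ((n : ℝ) + 1) with hδ
    have hδ0 : 0 < δ := by positivity
    set ε : ℝ := δ ^ 2 / (A + 1) with hε
    have hε0 : 0 < ε := by positivity
    have hb : ∀ B : ℝ, B ≤ A → ε * B ≤ δ ^ 2 := by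
      intro B hB
      rw [hε, div_mul_eq_mul_div, div_le_iff₀ (by positivity)]
      nlinarith [sq_nonneg δ]
    have hF := hf.inH1_steklov hε0
    have hG := hg.inH1_steklov hε0
    have f1 := (hf.steklov_L2_fun hε0).2
    have f2 := (hf.steklov_L2_deriv hε0).2
    have g1 := (hg.steklov_L2_fun hε0).2
    have g2 := (hg.steklov_L2_deriv hε0).2
    refine ⟨∫ x, steklov ε f x ^ 2 * steklov ε g x,
      cubic_close hf hg (WeakH1.of_inH1 hF) (WeakH1.of_inH1 hG) f1 g1 hδ0.le
        (hf.steklov_sub_le hε0 hδ0.le (hb _ (by linarith)))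
        (hg.steklov_sub_le hε0 hδ0.le (hb _ (by linarith))), ?_⟩
    refine (sharp_ineq_inH1 hα hβ hlam hF hG).trans ?_
    have hE0 := En_nonneg hα.le hβ.le (steklov ε f) (deriv (steklov ε f)) (steklov ε g)
      (deriv (steklov ε g))
    have hE : En α β (steklov ε f) (deriv (steklov ε f)) (steklov ε g) (deriv (steklov ε g))
        ≤ En α β f v g w := by
      unfold En; gcongr
    gcongr
  choose N hN hle using step
  have hlim : Tendsto N atTop (𝓝 (∫ x, f x ^ 2 * g x)) := by
    rw [tendsto_iff_norm_sub_tendsto_zero]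
    refine squeeze_zero (fun _ => norm_nonneg _) hN ?_
    simpa using (tendsto_one_div_add_atTop_nhds_zero_nat (𝕜 := ℝ)).mul_const
      (2 * (∫ x, f x ^ 2) + ∫ x, g x ^ 2)
  exact le_of_tendsto' ((hlim.pow 2).const_mul _) hle

/-! ### Regularity of weak minimizers -/

open scoped ContDiff in
lemma exists_primitive_compactSupport {ζ : ℝ → ℝ} (hζ : ContDiff ℝ ∞ ζ) (hs : HasCompactSupport ζ)
    (h0 : ∫ x, ζ x = 0) :
    ∃ η : ℝ → ℝ, ContDiff ℝ ∞ η ∧ HasCompactSupport η ∧ deriv η = ζ := by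
  obtain ⟨R, hR⟩ := hs.isCompact.isBounded.subset_closedBall 0
  have hz : ∀ x, x ∉ Icc (-R) R → ζ x = 0 := by
    intro x hx
    by_contra hne
    apply hx
    have := hR (subset_tsupport _ hne)
    rwa [Real.closedBall_eq_Icc, zero_sub, zero_add] at this
  have hc := hζ.continuous
  have hd : ∀ x, HasDerivAt (fun x => ∫ t in (-R)..x, ζ t) (ζ x) x := fun x =>
    intervalIntegral.integral_hasDerivAt_right (hc.intervalIntegrable _ _)
      (hc.stronglyMeasurableAtFilter _ _) hc.continuousAt
  have hder : deriv (fun x => ∫ t in (-R)..x, ζ t) = ζ := by ext x; exact (hd x).deriv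
  refine ⟨fun x => ∫ t in (-R)..x, ζ t, ?_, ?_, hder⟩
  · rw [contDiff_infty_iff_deriv, hder]
    exact ⟨fun x => (hd x).differentiableAt, hζ⟩
  · refine HasCompactSupport.intro (K := Icc (-R) R) isCompact_Icc fun x hx => ?_
    rcases lt_or_ge x (-R) with h | h
    · rw [intervalIntegral.integral_symm, intervalIntegral.integral_of_le h.le,
        setIntegral_congr_fun (g := fun _ => (0 : ℝ)) measurableSet_Ioc, integral_zero, neg_zero]
      intro t ht
      by_cases ht' : t = -R
      · -- by continuity, `ζ` also vanishes at the endpoint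
        subst ht'
        have : ζ =ᶠ[𝓝[<] (-R)] fun _ => 0 := by
          filter_upwards [self_mem_nhdsWithin] with y hy
          exact hz y fun hy' => absurd hy'.1 (not_le.2 hy)
        exact tendsto_nhds_unique (hc.continuousAt.tendsto.mono_left nhdsWithin_le_nhds)
          (tendsto_const_nhds.congr' this.symm)
      · exact hz t fun h' => ht' (le_antisymm ht.2 h'.1)
    · have hx' : R < x := by
        by_contra hcon
        exact hx ⟨h, not_lt.1 hcon⟩
      rw [intervalIntegral.integral_of_le h, ← h0]
      refine setIntegral_eq_integral_of_ae_compl_eq_zero ?_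
      have hne : ∀ᵐ t : ℝ, t ≠ -R := by simp [ae_iff]
      filter_upwards [hne] with t ht hmem
      refine hz t fun h' => hmem ⟨lt_of_le_of_ne h'.1 (Ne.symm ht), h'.2.trans hx'.le⟩

open scoped ContDiff in
/-- The lemma of du Bois-Reymond: a function with vanishing distributional derivative is almost
everywhere constant. -/
lemma du_bois_reymond {u : ℝ → ℝ} (hu : LocallyIntegrable u)
    (h : ∀ η : ℝ → ℝ, ContDiff ℝ ∞ η → HasCompactSupport η → ∫ x, u x * deriv η x = 0) :
    ∃ c : ℝ, u =ᵐ[volume] fun _ => c := by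
  let b : ContDiffBump (0 : ℝ) := ⟨1, 2, one_pos, one_lt_two⟩
  set χ : ℝ → ℝ := b.normed volume with hχ
  have χs : ContDiff ℝ ∞ χ := b.contDiff_normed
  have χc : HasCompactSupport χ := b.hasCompactSupport_normed
  have χ1 : ∫ x, χ x = 1 := b.integral_normed
  have hθint : ∀ θ : ℝ → ℝ, ContDiff ℝ ∞ θ → HasCompactSupport θ →
      Integrable (fun x => u x * θ x) := fun θ h1 h2 => by
    simpa [mul_comm] using hu.integrable_smul_left_of_hasCompactSupport h1.continuous h2
  refine ⟨∫ x, u x * χ x, ?_⟩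
  refine ae_eq_of_integral_contDiff_smul_eq hu (continuous_const.locallyIntegrable) ?_
  intro θ θs θc
  have θi : Integrable θ := θs.continuous.integrable_of_hasCompactSupport θc
  have χi : Integrable χ := χs.continuous.integrable_of_hasCompactSupport χc
  obtain ⟨η, ηs, ηc, ηd⟩ := exists_primitive_compactSupport (ζ := fun x => θ x - (∫ t, θ t) * χ x)
    (θs.sub (contDiff_const.mul χs)) (θc.sub (χc.mul_left))
    (by rw [integral_sub θi (χi.const_mul _), integral_const_mul, χ1]; ring)
  have h1 := h η ηs ηc
  rw [ηd] at h1
  have h2 : ∫ x, u x * (θ x - (∫ t, θ t) * χ x)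
      = (∫ x, u x * θ x) - (∫ t, θ t) * ∫ x, u x * χ x := by
    rw [← integral_const_mul, ← integral_sub (hθint θ θs θc) ((hθint χ χs χc).const_mul _)]
    congr 1; ext x; ring
  rw [h2] at h1
  simp only [smul_eq_mul]
  rw [integral_mul_const]
  simp only [mul_comm (θ _)]
  linarith

open scoped ContDiff in
/-- A weak solution of `-φ'' = F` with continuous `F` is differentiable everywhere. -/
lemma regularity {φ v F : ℝ → ℝ} (hφ : WeakH1 φ v) (hF : Continuous F)
    (h : ∀ η : ℝ → ℝ, ContDiff ℝ ∞ η → HasCompactSupport η →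
      ∫ x, v x * deriv η x = ∫ x, F x * η x) :
    InH1 φ ∧ deriv φ =ᵐ[volume] v := by
  set G : ℝ → ℝ := fun x => ∫ t in (0 : ℝ)..x, F t with hG
  have hGd : ∀ x, HasDerivAt G (F x) x := fun x =>
    intervalIntegral.integral_hasDerivAt_right (hF.intervalIntegrable _ _)
      (hF.stronglyMeasurableAtFilter _ _) hF.continuousAt
  have hGc : Continuous G := continuous_iff_continuousAt.2 fun x => (hGd x).continuousAt
  have hvl := locallyIntegrable_of_sq hφ.meas hφ.sqv
  obtain ⟨c, hc⟩ := du_bois_reymond (u := fun x => v x + G x) (hvl.add hGc.locallyIntegrable) (by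
    intro η ηs ηc
    have ηd : ContDiff ℝ ∞ (deriv η) := (contDiff_infty_iff_deriv.1 ηs).2
    have i1 : Integrable (fun x => v x * deriv η x) := by
      simpa [mul_comm] using
        hvl.integrable_smul_left_of_hasCompactSupport ηd.continuous ηc.deriv
    have i2 : Integrable (fun x => G x * deriv η x) :=
      (hGc.mul ηd.continuous).integrable_of_hasCompactSupport ηc.deriv.mul_left
    have i3 : Integrable (fun x => F x * η x) :=
      (hF.mul ηs.continuous).integrable_of_hasCompactSupport ηc.mul_left
    have i4 : Integrable (fun x => G x * η x) :=
      (hGc.mul ηs.continuous).integrable_of_hasCompactSupport ηc.mul_left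
    have ibp : ∫ x, G x * deriv η x = -∫ x, F x * η x :=
      integral_mul_deriv_eq_deriv_mul_of_integrable (fun x _ => hGd x)
        (fun x _ => ((contDiff_infty_iff_deriv.1 ηs).1 x).hasDerivAt) i2 i3 i4
    simp only [add_mul]
    rw [integral_add i1 i2, ibp, h η ηs ηc]; ring)
  have hv : v =ᵐ[volume] fun x => c - G x := hc.mono fun x hx => by
    have hx' : v x + G x = c := hx
    linarith
  have hVc : Continuous (fun x => c - G x) := continuous_const.sub hGc
  have hd : ∀ x, HasDerivAt φ (c - G x) x := by
    intro x
    have e : φ = fun x => φ 0 + ∫ t in (0 : ℝ)..x, (c - G t) := by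
      ext x; rw [(hφ.congr_ae hVc.measurable hv).ftc]; ring
    rw [e]
    exact (intervalIntegral.integral_hasDerivAt_right (hVc.intervalIntegrable _ _)
      (hVc.stronglyMeasurableAtFilter _ _) hVc.continuousAt).const_add _
  have hde : deriv φ = fun x => c - G x := by ext x; exact (hd x).deriv
  refine ⟨⟨fun x => (hd x).differentiableAt, hφ.sqf, ?_⟩, hde ▸ hv.symm⟩
  rw [hde]
  exact (hφ.congr_ae hVc.measurable hv).sqv

/-- First-order condition at `t = 0` for the sharp inequality along a line. -/
lemma first_order {M lam p q r d : ℝ} (hM : 0 < M) (hlam : 0 < lam)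
    (h : ∀ t : ℝ, M ^ 3 * (lam + t * p + t ^ 2 * q) ^ 2 ≤ lam ^ 2 * (M + t * r + t ^ 2 * d) ^ 3) :
    3 * lam * r = 2 * M * p := by
  set Q : ℝ → ℝ := fun t => lam ^ 2 * (M + t * r + t ^ 2 * d) ^ 3
    - M ^ 3 * (lam + t * p + t ^ 2 * q) ^ 2 with hQ
  have hlin : ∀ a b c : ℝ, HasDerivAt (fun t : ℝ => a + t * b + t ^ 2 * c) b 0 := by
    intro a b c
    have h1 := (((hasDerivAt_id (0 : ℝ)).mul_const b).const_add a).add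
      (((hasDerivAt_id (0 : ℝ)).pow 2).mul_const c)
    exact HasDerivAt.congr_deriv h1 (by simp)
  have hder : HasDerivAt Q (lam ^ 2 * (3 * M ^ 2 * r) - M ^ 3 * (2 * lam * p)) 0 := by
    have h1 := (((hlin M r d).pow 3).const_mul (lam ^ 2)).sub
      (((hlin lam p q).pow 2).const_mul (M ^ 3))
    exact HasDerivAt.congr_deriv h1 (by simp)
  have hmin : IsLocalMin Q 0 := by
    refine Eventually.of_forall fun t => ?_
    have h0 : Q 0 = 0 := by simp [hQ]; ring
    rw [h0]
    exact sub_nonneg.2 (h t)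
  have h0 := hmin.hasDerivAt_eq_zero hder
  have h1 : lam * M ^ 2 * (3 * lam * r - 2 * M * p) = 0 := by linarith
  have h2 : lam * M ^ 2 ≠ 0 := by positivity
  linarith [(mul_eq_zero.1 h1).resolve_left h2]

open scoped ContDiff in
lemma weakH1_of_test {η : ℝ → ℝ} (ηs : ContDiff ℝ ∞ η) (ηc : HasCompactSupport η) :
    WeakH1 η (deriv η) := by
  have ηd : ContDiff ℝ ∞ (deriv η) := (contDiff_infty_iff_deriv.1 ηs).2
  refine WeakH1.of_inH1 ⟨(contDiff_infty_iff_deriv.1 ηs).1, ?_, ?_⟩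
  · refine (ηs.continuous.pow 2).integrable_of_hasCompactSupport ?_
    simpa [pow_two] using ηc.mul_left (f := η)
  · refine (ηd.continuous.pow 2).integrable_of_hasCompactSupport ?_
    simpa [pow_two] using ηc.deriv.mul_left (f := deriv η)

/-- The Euler–Lagrange equations make a weak minimizer an everywhere differentiable one. -/
lemma minimizer_regular {α β lam : ℝ} (hα : 0 < α) (hβ : 0 < β) (hlam : 0 < lam)
    {φ v ψ w : ℝ → ℝ} (hφ : WeakH1 φ v) (hψ : WeakH1 ψ w) (hM : 0 < Mfun α β lam)
    (hE : En α β φ v ψ w = Mfun α β lam) (hN : ∫ x, φ x ^ 2 * ψ x = lam) :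
    (InH1 φ ∧ deriv φ =ᵐ[volume] v) ∧ (InH1 ψ ∧ deriv ψ =ᵐ[volume] w) := by
  have cφ := hφ.continuous
  have cψ := hψ.continuous
  set M := Mfun α β lam with hMdef
  constructor
  · refine regularity hφ (F := fun x => (2 * M / (3 * lam)) * (φ x * ψ x) - α * φ x)
      (by fun_prop) ?_
    intro η ηs ηc
    have hη := weakH1_of_test ηs ηc
    have i1 : Integrable (fun x => φ x * η x * ψ x) :=
      WeakH1.integrable_mul_bdd (integrable_mul_of_sq hφ.aesm hη.aesm hφ.sqf hη.sqf) hψ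
    have i2 := hη.integrable_cubic hψ
    have i3 := integrable_mul_of_sq hφ.aesm hη.aesm hφ.sqf hη.sqf
    have key := first_order (M := M) (lam := lam) (p := 2 * ∫ x, φ x * η x * ψ x)
      (q := ∫ x, η x ^ 2 * ψ x)
      (r := 2 * (∫ x, v x * deriv η x) + α * (2 * ∫ x, φ x * η x))
      (d := (∫ x, deriv η x ^ 2) + α * ∫ x, η x ^ 2) hM hlam (by
        intro t
        have h1 := sharp_ineq hα hβ hlam (hφ.add (hη.const_mul t)) hψ
        have e1 : ∫ x, (φ x + t * η x) ^ 2 * ψ x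
            = lam + t * (2 * ∫ x, φ x * η x * ψ x) + t ^ 2 * ∫ x, η x ^ 2 * ψ x := by
          rw [← hN, ← integral_const_mul, ← integral_const_mul, ← integral_const_mul,
            ← integral_add (hφ.integrable_cubic hψ) ((i1.const_mul _).const_mul _),
            ← integral_add (by exact (hφ.integrable_cubic hψ).add ((i1.const_mul _).const_mul _))
              (i2.const_mul _)]
          congr 1; ext x; ring
        have e2 : En α β (fun x => φ x + t * η x) (fun x => v x + t * deriv η x) ψ w
            = M + t * (2 * (∫ x, v x * deriv η x) + α * (2 * ∫ x, φ x * η x))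
              + t ^ 2 * ((∫ x, deriv η x ^ 2) + α * ∫ x, η x ^ 2) := by
          rw [← hE]
          unfold En
          rw [integral_add_sq_expand hφ.aesm hη.aesm hφ.sqf hη.sqf,
            integral_add_sq_expand hφ.aesmv hη.aesmv hφ.sqv hη.sqv]
          ring
        rw [e1, e2] at h1
        exact h1)
    have e3 : ∫ x, ((2 * M / (3 * lam)) * (φ x * ψ x) - α * φ x) * η x
        = (2 * M / (3 * lam)) * (∫ x, φ x * η x * ψ x) - α * ∫ x, φ x * η x := by
      rw [← integral_const_mul, ← integral_const_mul,
        ← integral_sub (i1.const_mul _) (i3.const_mul _)]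
      congr 1; ext x; ring
    rw [e3]
    field_simp
    linarith
  · refine regularity hψ (F := fun x => (M / (3 * lam)) * φ x ^ 2 - β * ψ x)
      (by fun_prop) ?_
    intro η ηs ηc
    have hη := weakH1_of_test ηs ηc
    have i1 := hφ.integrable_cubic hη
    have i3 := integrable_mul_of_sq hψ.aesm hη.aesm hψ.sqf hη.sqf
    have key := first_order (M := M) (lam := lam) (p := ∫ x, φ x ^ 2 * η x)
      (q := 0)
      (r := 2 * (∫ x, w x * deriv η x) + β * (2 * ∫ x, ψ x * η x))
      (d := (∫ x, deriv η x ^ 2) + β * ∫ x, η x ^ 2) hM hlam (by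
        intro t
        have h1 := sharp_ineq hα hβ hlam hφ (hψ.add (hη.const_mul t))
        have e1 : ∫ x, φ x ^ 2 * (ψ x + t * η x)
            = lam + t * (∫ x, φ x ^ 2 * η x) + t ^ 2 * 0 := by
          rw [← hN, ← integral_const_mul, mul_zero, add_zero,
            ← integral_add (hφ.integrable_cubic hψ) (i1.const_mul _)]
          congr 1; ext x; ring
        have e2 : En α β φ v (fun x => ψ x + t * η x) (fun x => w x + t * deriv η x)
            = M + t * (2 * (∫ x, w x * deriv η x) + β * (2 * ∫ x, ψ x * η x))
              + t ^ 2 * ((∫ x, deriv η x ^ 2) + β * ∫ x, η x ^ 2) := by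
          rw [← hE]
          unfold En
          rw [integral_add_sq_expand hψ.aesm hη.aesm hψ.sqf hη.sqf,
            integral_add_sq_expand hψ.aesmv hη.aesmv hψ.sqv hη.sqv]
          ring
        rw [e1, e2] at h1
        exact h1)
    have e3 : ∫ x, ((M / (3 * lam)) * φ x ^ 2 - β * ψ x) * η x
        = (M / (3 * lam)) * (∫ x, φ x ^ 2 * η x) - β * ∫ x, ψ x * η x := by
      rw [← integral_const_mul, ← integral_const_mul,
        ← integral_sub (i1.const_mul _) (i3.const_mul _)]
      congr 1; ext x; ring
    rw [e3]
    field_simp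
    linarith

/-! ### Weak compactness -/

/-- Sequential Banach–Alaoglu in `L²(ℝ)`, phrased with functions. -/
lemma weak_compact {u : ℕ → ℝ → ℝ} (hm : ∀ n, Measurable (u n))
    (hi : ∀ n, Integrable (fun x => u n x ^ 2)) {C : ℝ} (hC : ∀ n, ∫ x, u n x ^ 2 ≤ C) :
    ∃ (v : ℝ → ℝ) (ns : ℕ → ℕ), Measurable v ∧ Integrable (fun x => v x ^ 2) ∧ StrictMono ns ∧
      ∀ h : ℝ → ℝ, AEStronglyMeasurable h → Integrable (fun x => h x ^ 2) →
        Tendsto (fun k => ∫ x, u (ns k) x * h x) atTop (𝓝 (∫ x, v x * h x)) := by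
  have mem : ∀ {h : ℝ → ℝ}, AEStronglyMeasurable h → Integrable (fun x => h x ^ 2) →
      MemLp h 2 volume := fun h1 h2 => (memLp_two_iff_integrable_sq h1).2 h2
  have hu : ∀ n, MemLp (u n) 2 volume := fun n => mem (hm n).aestronglyMeasurable (hi n)
  have inner_eq : ∀ (p q : Lp ℝ 2 (volume : Measure ℝ)) (p' q' : ℝ → ℝ), p =ᵐ[volume] p' →
      q =ᵐ[volume] q' → inner ℝ p q = ∫ x, p' x * q' x := by
    intro p q p' q' hp hq
    rw [L2.inner_def]
    refine integral_congr_ae ?_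
    filter_upwards [hp, hq] with x h1 h2
    rw [h1, h2]; simp [mul_comm]
  let X : ℕ → Lp ℝ 2 (volume : Measure ℝ) := fun n => (hu n).toLp (u n)
  have hX : ∀ n, ‖X n‖ ≤ Real.sqrt C := by
    intro n
    apply Real.le_sqrt_of_sq_le
    rw [← real_inner_self_eq_norm_sq, inner_eq _ _ _ _ (hu n).coeFn_toLp (hu n).coeFn_toLp]
    simpa [pow_two] using hC n
  let T : ℕ → WeakDual ℝ (Lp ℝ 2 (volume : Measure ℝ)) :=
    fun n => StrongDual.toWeakDual (innerSL ℝ (X n))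
  have hT : ∀ n, T n ∈ WeakDual.toStrongDual ⁻¹'
      Metric.closedBall (0 : StrongDual ℝ (Lp ℝ 2 (volume : Measure ℝ))) (Real.sqrt C) := by
    intro n
    rw [mem_preimage, mem_closedBall_zero_iff]
    have : WeakDual.toStrongDual (T n) = innerSL ℝ (X n) := rfl
    rw [this, innerSL_apply_norm]
    exact hX n
  have : Fact ((2 : ENNReal) ≠ ⊤) := ⟨by norm_num⟩
  obtain ⟨a, -, ns, hns, hlim⟩ := WeakDual.isSeqCompact_closedBall ℝ _ _ _ hT
  let v0 : Lp ℝ 2 (volume : Measure ℝ) :=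
    (InnerProductSpace.toDual ℝ _).symm (WeakDual.toStrongDual a)
  have hv0 := (Lp.aestronglyMeasurable v0)
  have hae := hv0.ae_eq_mk
  refine ⟨hv0.mk _, ns, hv0.stronglyMeasurable_mk.measurable, ?_, hns, ?_⟩
  · exact (memLp_two_iff_integrable_sq hv0.stronglyMeasurable_mk.aestronglyMeasurable).1
      ((Lp.memLp v0).ae_eq hae)
  · intro h h1 h2
    have hh := mem h1 h2
    have e := ((WeakDual.eval_continuous (𝕜 := ℝ) (hh.toLp h)).tendsto a).comp hlim
    have e1 : a (hh.toLp h) = ∫ x, hv0.mk _ x * h x := by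
      rw [← inner_eq v0 _ _ _ hae hh.coeFn_toLp]
      exact (InnerProductSpace.toDual_symm_apply (𝕜 := ℝ)).symm
    rw [e1] at e
    refine e.congr fun k => ?_
    exact inner_eq _ _ _ _ (hu (ns k)).coeFn_toLp hh.coeFn_toLp

/-- A sequence bounded in `L²` that tends to zero pointwise tends to zero weakly in `L²`. -/
lemma vanish {z : ℕ → ℝ → ℝ} {h : ℝ → ℝ} {C : ℝ} (hz : ∀ n, AEStronglyMeasurable (z n))
    (hz2 : ∀ n, Integrable (fun x => z n x ^ 2)) (hC : ∀ n, ∫ x, z n x ^ 2 ≤ C)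
    (hh : AEStronglyMeasurable h) (hh2 : Integrable (fun x => h x ^ 2))
    (hlim : ∀ x, Tendsto (fun n => z n x) atTop (𝓝 0)) :
    Tendsto (fun n => ∫ x, h x * z n x) atTop (𝓝 0) := by
  have hC0 : 0 ≤ C := (integral_nonneg fun _ => sq_nonneg _).trans (hC 0)
  rw [Metric.tendsto_nhds]
  intro ε hε
  set δ : ℝ := ε / (2 * (C + 1)) with hδ
  have hδ0 : 0 < δ := by positivity
  -- by Young's inequality `|h z| - δ z²` is dominated by `h² / (4 δ)`, uniformly in `z`
  set P : ℕ → ℝ → ℝ := fun n x => max (|h x * z n x| - δ * z n x ^ 2) 0 with hP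
  have hPm : ∀ n, AEStronglyMeasurable (P n) := fun n =>
    ((continuous_abs.comp_aestronglyMeasurable (hh.mul (hz n))).sub
      (((hz n).pow 2).const_mul δ)).sup aestronglyMeasurable_const
  have hPb : ∀ n x, ‖P n x‖ ≤ (1 / (4 * δ)) * h x ^ 2 := by
    intro n x
    rw [Real.norm_eq_abs, abs_of_nonneg (le_max_right _ _)]
    refine max_le ?_ (by positivity)
    rw [abs_mul, ← sq_abs (z n x), ← sq_abs (h x), one_div_mul_eq_div, le_div_iff₀ (by positivity)]
    nlinarith [sq_nonneg (|h x| - 2 * δ * |z n x|)]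
  have hPi : ∀ n, Integrable (P n) := fun n =>
    (hh2.const_mul (1 / (4 * δ))).mono' (hPm n) (Eventually.of_forall (hPb n))
  have hPlim : Tendsto (fun n => ∫ x, P n x) atTop (𝓝 0) := by
    have := tendsto_integral_of_dominated_convergence (F := P) (f := fun _ => (0 : ℝ)) _ hPm
      (hh2.const_mul (1 / (4 * δ))) (fun n => Eventually.of_forall (hPb n))
      (Eventually.of_forall fun x => by
        have h1 : Tendsto (fun n => |h x * z n x| - δ * z n x ^ 2) atTop (𝓝 0) := by
          simpa using (((hlim x).const_mul (h x)).abs).sub (((hlim x).pow 2).const_mul δ)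
        simpa only [max_self] using h1.max (tendsto_const_nhds (x := (0 : ℝ))))
    simpa using this
  filter_upwards [hPlim.eventually (gt_mem_nhds (half_pos hε))] with n hn
  have hi := integrable_mul_of_sq hh (hz n) hh2 (hz2 n)
  have h1 : |∫ x, h x * z n x| ≤ ∫ x, |h x * z n x| := by
    simpa using norm_integral_le_integral_norm (μ := volume) (fun x => h x * z n x)
  have h2 : ∫ x, |h x * z n x| ≤ ∫ x, (P n x + δ * z n x ^ 2) :=
    integral_mono hi.abs ((hPi n).add ((hz2 n).const_mul δ)) fun x => by
      have : |h x * z n x| - δ * z n x ^ 2 ≤ P n x := le_max_left _ _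
      simp only; linarith
  rw [integral_add (hPi n) ((hz2 n).const_mul δ), integral_const_mul] at h2
  have h3 : δ * (∫ x, z n x ^ 2) ≤ ε / 2 := by
    calc δ * (∫ x, z n x ^ 2) ≤ δ * (C + 1) := by
          apply mul_le_mul_of_nonneg_left _ hδ0.le; linarith [hC n]
      _ = ε / 2 := by rw [hδ]; field_simp
  rw [Real.dist_eq, sub_zero]
  linarith

lemma integrable_sq_of_tendsto {f : ℕ → ℝ → ℝ} {φ : ℝ → ℝ} {C : ℝ} (hf : ∀ n, Continuous (f n))
    (hφ : Measurable φ) (hi : ∀ n, Integrable (fun x => f n x ^ 2)) (hC : ∀ n, ∫ x, f n x ^ 2 ≤ C)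
    (hlim : ∀ x, Tendsto (fun n => f n x) atTop (𝓝 (φ x))) : Integrable (fun x => φ x ^ 2) := by
  refine ⟨(hφ.pow_const 2).aestronglyMeasurable, ?_⟩
  rw [hasFiniteIntegral_iff_ofReal (Eventually.of_forall fun x => sq_nonneg _)]
  have h1 := lintegral_liminf_le (μ := volume) (u := atTop)
    (f := fun n x => ENNReal.ofReal (f n x ^ 2))
    (fun n => ((hf n).measurable.pow_const 2).ennreal_ofReal)
  have h2 : ∀ x, liminf (fun n => ENNReal.ofReal (f n x ^ 2)) atTop = ENNReal.ofReal (φ x ^ 2) :=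
    fun x => ((ENNReal.continuous_ofReal.tendsto _).comp ((hlim x).pow 2)).liminf_eq
  simp only [h2] at h1
  refine (h1.trans ?_).trans_lt (ENNReal.ofReal_lt_top (r := C))
  refine liminf_le_of_le (by isBoundedDefault) fun b hb => ?_
  obtain ⟨n, hn⟩ := hb.exists
  refine hn.trans ?_
  rw [← ofReal_integral_eq_lintegral_ofReal (hi n) (Eventually.of_forall fun x => sq_nonneg _)]
  exact ENNReal.ofReal_le_ofReal (hC n)

/-- Bounded sequences in `H¹` have subsequences converging pointwise, with weakly convergent
derivatives. -/
lemma exists_weak_limit {f v : ℕ → ℝ → ℝ} (h : ∀ n, WeakH1 (f n) (v n)) {C : ℝ}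
    (hf : ∀ n, ∫ x, f n x ^ 2 ≤ C) (hv : ∀ n, ∫ x, v n x ^ 2 ≤ C) :
    ∃ (ns : ℕ → ℕ) (φ V : ℝ → ℝ), StrictMono ns ∧ WeakH1 φ V ∧
      (∀ x, Tendsto (fun k => f (ns k) x) atTop (𝓝 (φ x))) ∧
      ∀ h : ℝ → ℝ, AEStronglyMeasurable h → Integrable (fun x => h x ^ 2) →
        Tendsto (fun k => ∫ x, v (ns k) x * h x) atTop (𝓝 (∫ x, V x * h x)) := by
  obtain ⟨V, n1, hVm, hV2, hn1, hw⟩ := weak_compact (fun n => (h n).meas) (fun n => (h n).sqv) hv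
  have hb : ∀ k, f (n1 k) 0 ∈ Metric.closedBall (0 : ℝ) (Real.sqrt (2 * C + 2 * C)) := by
    intro k
    rw [mem_closedBall_zero_iff, Real.norm_eq_abs]
    apply Real.abs_le_sqrt
    linarith [(h (n1 k)).sup_bound 0, hf (n1 k), hv (n1 k)]
  obtain ⟨l, -, n2, hn2, hl⟩ := tendsto_subseq_of_bounded Metric.isBounded_closedBall hb
  have hVi := intervalIntegrable_of_sq hVm hV2
  have hIle : ∀ a b : ℝ, a ≤ b →
      Tendsto (fun k => ∫ x in a..b, v (n1 k) x) atTop (𝓝 (∫ x in a..b, V x)) := by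
    intro a b hab
    have := hw ((Ioc a b).indicator fun _ => 1)
      (aestronglyMeasurable_const.indicator measurableSet_Ioc) (by
        have : (fun x => ((Ioc a b).indicator (fun _ => (1 : ℝ)) x) ^ 2)
            = (Ioc a b).indicator fun _ => 1 := by
          ext x; by_cases hx : x ∈ Ioc a b <;> simp [hx]
        rw [this]
        exact (integrable_indicator_iff measurableSet_Ioc).2 (integrableOn_const (by simp)))
    have e : ∀ u : ℝ → ℝ, ∫ x, u x * (Ioc a b).indicator (fun _ => (1 : ℝ)) x
        = ∫ x in a..b, u x := by
      intro u
      rw [intervalIntegral.integral_of_le hab, ← integral_indicator measurableSet_Ioc]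
      congr 1; ext x; by_cases hx : x ∈ Ioc a b <;> simp [hx]
    simpa only [e] using this
  have hI : ∀ b : ℝ, Tendsto (fun k => ∫ x in (0 : ℝ)..b, v (n1 k) x) atTop
      (𝓝 (∫ x in (0 : ℝ)..b, V x)) := by
    intro b
    rcases le_total 0 b with hb' | hb'
    · exact hIle 0 b hb'
    · simp only [intervalIntegral.integral_symm b 0]
      exact (hIle b 0 hb').neg
  have hpt : ∀ x, Tendsto (fun k => f (n1 (n2 k)) x) atTop
      (𝓝 (l + ∫ t in (0 : ℝ)..x, V t)) := by
    intro x
    refine (hl.add ((hI x).comp hn2.tendsto_atTop)).congr fun k => ?_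
    simp only [Function.comp_apply]
    rw [(h (n1 (n2 k))).ftc]; ring
  have hφc : Continuous fun x => l + ∫ t in (0 : ℝ)..x, V t :=
    continuous_const.add (intervalIntegral.continuous_primitive hVi 0)
  refine ⟨n1 ∘ n2, fun x => l + ∫ t in (0 : ℝ)..x, V t, V, hn1.comp hn2,
    ⟨hVm, ?_, hV2, ?_⟩, hpt, fun h' h1 h2 => (hw h' h1 h2).comp hn2.tendsto_atTop⟩
  · exact integrable_sq_of_tendsto (fun k => (h (n1 (n2 k))).continuous) hφc.measurable
      (fun k => (h (n1 (n2 k))).sqf) (fun k => hf (n1 (n2 k))) hpt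
  · intro a b
    rw [add_sub_add_left_eq_sub, intervalIntegral.integral_interval_sub_left (hVi _ _) (hVi _ _)]

/-! ### Splitting of the functionals along weak limits -/

lemma integral_sq_nonneg (u : ℝ → ℝ) : 0 ≤ ∫ x, u x ^ 2 := integral_nonneg fun _ => sq_nonneg _

lemma WeakH1.mul_sq {f v g w : ℝ → ℝ} (hf : WeakH1 f v) (hg : WeakH1 g w) :
    Integrable (fun x => (f x * g x) ^ 2) ∧
      ∫ x, (f x * g x) ^ 2 ≤ (2 * (∫ x, g x ^ 2) + 2 * ∫ x, w x ^ 2) * ∫ x, f x ^ 2 := by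
  have hi : Integrable (fun x => (f x * g x) ^ 2) :=
    (WeakH1.integrable_mul_bdd (hf.integrable_cubic hg) hg).congr
      (Eventually.of_forall fun x => by simp only; ring)
  refine ⟨hi, ?_⟩
  rw [← integral_const_mul]
  refine integral_mono hi (hf.sqf.const_mul _) fun x => ?_
  simp only [mul_pow]
  rw [mul_comm]
  exact mul_le_mul_of_nonneg_right (hg.sup_bound x) (sq_nonneg _)

lemma integral_sub_sq_le {f φ : ℝ → ℝ} (hf : AEStronglyMeasurable f)
    (hφ : AEStronglyMeasurable φ) (hf2 : Integrable (fun x => f x ^ 2))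
    (hφ2 : Integrable (fun x => φ x ^ 2)) :
    ∫ x, (f x - φ x) ^ 2 ≤ 2 * (∫ x, f x ^ 2) + 2 * ∫ x, φ x ^ 2 := by
  have h1 := integral_add_sq_expand hf hφ hf2 hφ2 (-1)
  have h2 := integral_add_sq_expand hf hφ hf2 hφ2 1
  have h3 : 0 ≤ ∫ x, (f x + 1 * φ x) ^ 2 := integral_nonneg fun _ => sq_nonneg _
  have h4 : ∫ x, (f x - φ x) ^ 2 = ∫ x, (f x + -1 * φ x) ^ 2 := by
    congr 1; ext x; ring
  rw [h4]; linarith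

/-- Pythagoras for weakly convergent sequences. -/
lemma sq_split {f : ℕ → ℝ → ℝ} {φ : ℝ → ℝ} (hf : ∀ n, AEStronglyMeasurable (f n))
    (hφ : AEStronglyMeasurable φ) (hf2 : ∀ n, Integrable (fun x => f n x ^ 2))
    (hφ2 : Integrable (fun x => φ x ^ 2))
    (hw : Tendsto (fun n => ∫ x, f n x * φ x) atTop (𝓝 (∫ x, φ x * φ x))) :
    Tendsto (fun n => (∫ x, f n x ^ 2) - ∫ x, (f n x - φ x) ^ 2) atTop (𝓝 (∫ x, φ x ^ 2)) := by
  have e : ∀ n, 2 * (∫ x, f n x * φ x) - (∫ x, φ x ^ 2)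
      = (∫ x, f n x ^ 2) - ∫ x, (f n x - φ x) ^ 2 := by
    intro n
    have h1 := integral_add_sq_expand (hf n) hφ (hf2 n) hφ2 (-1)
    have h4 : ∫ x, (f n x - φ x) ^ 2 = ∫ x, (f n x + -1 * φ x) ^ 2 := by
      congr 1; ext x; ring
    rw [h4, h1]; ring
  refine Tendsto.congr e ?_
  have h := (hw.const_mul 2).sub_const (∫ x, φ x ^ 2)
  have e2 : 2 * (∫ x, φ x * φ x) - (∫ x, φ x ^ 2) = ∫ x, φ x ^ 2 := by
    simp only [← pow_two]; ring
  rwa [e2] at h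

lemma weak_of_pointwise {f v : ℕ → ℝ → ℝ} {φ V : ℝ → ℝ} {C : ℝ} (hf : ∀ n, WeakH1 (f n) (v n))
    (hφ : WeakH1 φ V) (hC : ∀ n, ∫ x, (f n x - φ x) ^ 2 ≤ C)
    (hlim : ∀ x, Tendsto (fun n => f n x) atTop (𝓝 (φ x))) :
    Tendsto (fun n => ∫ x, f n x * φ x) atTop (𝓝 (∫ x, φ x * φ x)) := by
  have h1 := vanish (z := fun n x => f n x - φ x) (fun n => ((hf n).sub hφ).aesm)
    (fun n => ((hf n).sub hφ).sqf) hC hφ.aesm hφ.sqf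
    (fun x => by simpa using (hlim x).sub_const (φ x))
  have h2 := h1.add_const (∫ x, φ x * φ x)
  rw [zero_add] at h2
  refine h2.congr fun n => ?_
  rw [← integral_add
    (integrable_mul_of_sq hφ.aesm ((hf n).sub hφ).aesm hφ.sqf ((hf n).sub hφ).sqf)
    (integrable_mul_of_sq hφ.aesm hφ.aesm hφ.sqf hφ.sqf)]
  congr 1; ext x; ring

/-- A Brezis–Lieb splitting for the cubic constraint. -/
lemma cubic_split {f v g w : ℕ → ℝ → ℝ} {φ V ψ W : ℝ → ℝ} {C : ℝ}
    (hf : ∀ n, WeakH1 (f n) (v n)) (hg : ∀ n, WeakH1 (g n) (w n)) (hφ : WeakH1 φ V)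
    (hψ : WeakH1 ψ W) (hC0 : 0 ≤ C) (hfC : ∀ n, ∫ x, (f n x - φ x) ^ 2 ≤ C)
    (hvC : ∀ n, ∫ x, (v n x - V x) ^ 2 ≤ C)
    (hgC : ∀ n, ∫ x, (g n x - ψ x) ^ 2 ≤ C) (hwC : ∀ n, ∫ x, (w n x - W x) ^ 2 ≤ C)
    (hfl : ∀ x, Tendsto (fun n => f n x) atTop (𝓝 (φ x)))
    (hgl : ∀ x, Tendsto (fun n => g n x) atTop (𝓝 (ψ x))) :
    Tendsto (fun n => (∫ x, f n x ^ 2 * g n x) - ∫ x, (f n x - φ x) ^ 2 * (g n x - ψ x)) atTop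
      (𝓝 (∫ x, φ x ^ 2 * ψ x)) := by
  have hu := fun n => (hf n).sub hφ
  have hz := fun n => (hg n).sub hψ
  have hul : ∀ x, Tendsto (fun n => f n x - φ x) atTop (𝓝 0) := fun x => by
    simpa using (hfl x).sub_const (φ x)
  have hzl : ∀ x, Tendsto (fun n => g n x - ψ x) atTop (𝓝 0) := fun x => by
    simpa using (hgl x).sub_const (ψ x)
  have hprod : ∀ {p q p' q' : ℝ → ℝ}, WeakH1 p p' → WeakH1 q q' → ∫ x, p x ^ 2 ≤ C →
      ∫ x, q x ^ 2 ≤ C → ∫ x, q' x ^ 2 ≤ C → ∫ x, (p x * q x) ^ 2 ≤ (2 * C + 2 * C) * C := by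
    intro p q p' q' hp hq h1 h2 h3
    refine (hp.mul_sq hq).2.trans ?_
    have := integral_sq_nonneg p
    gcongr
  have t1 := vanish (h := fun x => φ x * φ x) (fun n => (hz n).aesm) (fun n => (hz n).sqf) hgC
    (hφ.aesm.mul hφ.aesm) (hφ.mul_sq hφ).1 hzl
  have t2 := vanish (h := fun x => φ x * ψ x) (fun n => (hu n).aesm) (fun n => (hu n).sqf) hfC
    (hφ.aesm.mul hψ.aesm) (hφ.mul_sq hψ).1 hul
  have t3 := vanish (z := fun n x => (f n x - φ x) * (g n x - ψ x)) (h := φ)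
    (fun n => (hu n).aesm.mul (hz n).aesm) (fun n => ((hu n).mul_sq (hz n)).1)
    (fun n => hprod (hu n) (hz n) (hfC n) (hgC n) (hwC n)) hφ.aesm hφ.sqf
    (fun x => by simpa using (hul x).mul (hzl x))
  have t4 := vanish (z := fun n x => (f n x - φ x) * (f n x - φ x)) (h := ψ)
    (fun n => (hu n).aesm.mul (hu n).aesm) (fun n => ((hu n).mul_sq (hu n)).1)
    (fun n => hprod (hu n) (hu n) (hfC n) (hfC n) (hvC n)) hψ.aesm hψ.sqf
    (fun x => by simpa using (hul x).mul (hul x))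
  have t := ((((t2.const_mul 2).add t1).add (t3.const_mul 2)).add t4).add_const
    (∫ x, φ x ^ 2 * ψ x)
  simp only [mul_zero, add_zero, zero_add] at t
  refine t.congr fun n => ?_
  have i1 := integrable_mul_of_sq (hφ.aesm.mul hφ.aesm) (hz n).aesm (hφ.mul_sq hφ).1 (hz n).sqf
  have i2 := (integrable_mul_of_sq (hφ.aesm.mul hψ.aesm) (hu n).aesm (hφ.mul_sq hψ).1
    (hu n).sqf).const_mul 2
  have i3 := (integrable_mul_of_sq hφ.aesm ((hu n).aesm.mul (hz n).aesm) hφ.sqf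
    ((hu n).mul_sq (hz n)).1).const_mul 2
  have i4 := integrable_mul_of_sq hψ.aesm ((hu n).aesm.mul (hu n).aesm) hψ.sqf
    ((hu n).mul_sq (hu n)).1
  have i5 := hφ.integrable_cubic hψ
  rw [← integral_sub ((hf n).integrable_cubic (hg n)) ((hu n).integrable_cubic (hz n)),
    ← integral_const_mul, ← integral_const_mul, ← integral_add (by exact i2) (by exact i1),
    ← integral_add (by exact i2.add i1) (by exact i3),
    ← integral_add (by exact (i2.add i1).add i3) (by exact i4),
    ← integral_add (by exact ((i2.add i1).add i3).add i4) i5]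
  congr 1; ext x; ring

/-! ### Excluding vanishing and dichotomy -/

/-- Strict subadditivity of `t ↦ t^{2/3}` in polynomial form: the mass does not split. -/
lemma dichotomy_scalar {M lam A a : ℝ} (hM : 0 < M) (hlam : 0 < lam) (hA : 0 ≤ A) (hAM : A ≤ M)
    (h1 : M ^ 3 * a ^ 2 ≤ lam ^ 2 * A ^ 3) (h2 : M ^ 3 * (lam - a) ^ 2 ≤ lam ^ 2 * (M - A) ^ 3) :
    A = 0 ∨ (A = M ∧ a = lam) := by
  have key : ∀ B b : ℝ, 0 ≤ B → B ≤ M → M ^ 3 * b ^ 2 ≤ lam ^ 2 * B ^ 3 → M * b ≤ lam * B := by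
    intro B b hB hBM h
    have h3 : M * (M * b) ^ 2 ≤ M * (lam * B) ^ 2 := by
      have : lam ^ 2 * B ^ 3 ≤ lam ^ 2 * (B ^ 2 * M) := by
        have : B ^ 3 ≤ B ^ 2 * M := by nlinarith [sq_nonneg B]
        gcongr
      nlinarith
    exact le_of_sq_le_sq (le_of_mul_le_mul_left h3 hM) (by positivity)
  have k1 := key A a hA hAM h1
  have k2 := key (M - A) (lam - a) (by linarith) (by linarith) h2
  have k3 : M * a = lam * A := by linarith
  have k4 : lam ^ 2 * (A ^ 2 * (M - A)) ≤ 0 := by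
    have : M ^ 3 * a ^ 2 = lam ^ 2 * (A ^ 2 * M) := by
      calc M ^ 3 * a ^ 2 = M * (M * a) ^ 2 := by ring
        _ = _ := by rw [k3]; ring
    nlinarith
  have k5 : A ^ 2 * (M - A) ≤ 0 := nonpos_of_mul_nonpos_right k4 (by positivity)
  have k6 : A ^ 2 * (M - A) = 0 := le_antisymm k5 (mul_nonneg (sq_nonneg _) (by linarith))
  rcases mul_eq_zero.1 k6 with h | h
  · left; exact pow_eq_zero_iff (two_ne_zero) |>.1 h
  · right
    have hAM' : A = M := by linarith
    refine ⟨hAM', ?_⟩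
    rw [hAM'] at k3
    exact mul_left_cancel₀ hM.ne' (by linarith)

lemma cubic_le_of_bound {f v g : ℝ → ℝ} (hf : WeakH1 f v) {c : ℝ}
    (h : ∀ x, |g x| ≤ c) : |∫ x, f x ^ 2 * g x| ≤ c * ∫ x, f x ^ 2 := by
  rw [← integral_const_mul, ← Real.norm_eq_abs]
  refine norm_integral_le_of_norm_le (hf.sqf.const_mul c) (Eventually.of_forall fun x => ?_)
  rw [norm_mul, mul_comm, Real.norm_eq_abs, Real.norm_eq_abs, abs_of_nonneg (sq_nonneg (f x))]
  exact mul_le_mul_of_nonneg_right (h x) (sq_nonneg _)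

lemma parts_le_En {α β : ℝ} (hα : 0 < α) (hβ : 0 < β) (f v g w : ℝ → ℝ) :
    ∫ x, f x ^ 2 ≤ En α β f v g w / α ∧ ∫ x, v x ^ 2 ≤ En α β f v g w ∧
      ∫ x, g x ^ 2 ≤ En α β f v g w / β ∧ ∫ x, w x ^ 2 ≤ En α β f v g w := by
  have a1 := mul_nonneg hα.le (integral_sq_nonneg f)
  have a2 := integral_sq_nonneg v
  have a3 := mul_nonneg hβ.le (integral_sq_nonneg g)
  have a4 := integral_sq_nonneg w
  rw [le_div_iff₀ hα, le_div_iff₀ hβ]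
  unfold En
  refine ⟨?_, ?_, ?_, ?_⟩ <;> linarith

lemma cubic_sq_le_En {α β : ℝ} (hα : 0 < α) (hβ : 0 < β) {f v g w : ℝ → ℝ} (hf : WeakH1 f v)
    (hg : WeakH1 g w) : (∫ x, f x ^ 2 * g x) ^ 2
      ≤ (2 / β + 2) * (1 / α) ^ 2 * En α β f v g w ^ 3 := by
  obtain ⟨p1, p2, p3, p4⟩ := parts_le_En hα hβ f v g w
  have hE := En_nonneg hα.le hβ.le f v g w
  set E := En α β f v g w
  have hs : ∀ x, |g x| ≤ Real.sqrt ((2 / β + 2) * E) := by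
    intro x
    apply Real.abs_le_sqrt
    refine (hg.sup_bound x).trans ?_
    have : (2 / β + 2) * E = 2 * (E / β) + 2 * E := by ring
    rw [this]; linarith
  have h1 := cubic_le_of_bound hf hs
  calc (∫ x, f x ^ 2 * g x) ^ 2 = |∫ x, f x ^ 2 * g x| ^ 2 := (sq_abs _).symm
    _ ≤ (Real.sqrt ((2 / β + 2) * E) * (E / α)) ^ 2 := by
        have := Real.sqrt_nonneg ((2 / β + 2) * E)
        gcongr
        exact h1.trans (by gcongr)
    _ = (2 / β + 2) * (1 / α) ^ 2 * E ^ 3 := by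
        rw [mul_pow, Real.sq_sqrt (by positivity)]; ring

lemma Mfun_pos {α β lam : ℝ} (hα : 0 < α) (hβ : 0 < β) (hlam : 0 < lam) {f v g w : ℕ → ℝ → ℝ}
    (hf : ∀ n, WeakH1 (f n) (v n)) (hg : ∀ n, WeakH1 (g n) (w n))
    (hN : Tendsto (fun n => ∫ x, f n x ^ 2 * g n x) atTop (𝓝 lam))
    (hE : Tendsto (fun n => En α β (f n) (v n) (g n) (w n)) atTop (𝓝 (Mfun α β lam))) :
    0 < Mfun α β lam := by
  refine lt_of_le_of_ne (Mfun_nonneg hα hβ) fun h0 => ?_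
  have := le_of_tendsto_of_tendsto' (hN.pow 2) ((hE.pow 3).const_mul _)
    fun n => cubic_sq_le_En hα hβ (hf n) (hg n)
  rw [← h0] at this
  have : 0 < lam ^ 2 := by positivity
  simp at *
  linarith

/-- The translations: for large `n`, `|g n|` reaches a fixed height at `y n`. -/
lemma exists_centers {α β lam : ℝ} (hα : 0 < α) (hβ : 0 < β) (hlam : 0 < lam)
    {f v g w : ℕ → ℝ → ℝ} (hf : ∀ n, WeakH1 (f n) (v n))
    {B : ℝ} (hB : ∀ n, En α β (f n) (v n) (g n) (w n) ≤ B)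
    (hN : Tendsto (fun n => ∫ x, f n x ^ 2 * g n x) atTop (𝓝 lam)) :
    ∃ (y : ℕ → ℝ) (c : ℝ), 0 < c ∧ ∀ᶠ n in atTop, c ≤ |g n (y n)| := by
  have hB0 : 0 ≤ B := (En_nonneg hα.le hβ.le _ _ _ _).trans (hB 0)
  set c : ℝ := lam / (2 * (B / α + 1)) with hc
  have hc0 : 0 < c := by positivity
  have hex : ∀ n, ∃ y, lam / 2 < (∫ x, f n x ^ 2 * g n x) → c ≤ |g n y| := by
    intro n
    by_contra! hcon
    have h1 := cubic_le_of_bound (hf n) (g := g n) (c := c) fun x => (hcon x).2.le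
    have h2 : ∫ x, f n x ^ 2 ≤ B / α :=
      (parts_le_En hα hβ (f n) (v n) (g n) (w n)).1.trans
        (div_le_div_of_nonneg_right (hB n) hα.le)
    have h3 : c * (∫ x, f n x ^ 2) ≤ c * (B / α + 1) := by
      apply mul_le_mul_of_nonneg_left _ hc0.le; linarith
    have h4 : c * (B / α + 1) = lam / 2 := by
      rw [hc]
      have : B / α + 1 ≠ 0 := by positivity
      field_simp
    linarith [(hcon 0).1, le_abs_self (∫ x, f n x ^ 2 * g n x)]
  choose y hy using hex
  refine ⟨y, c, hc0, ?_⟩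
  filter_upwards [hN.eventually (lt_mem_nhds (show lam / 2 < lam by linarith))] with n hn
  exact hy n hn

/-- Compactness of a minimizing sequence that has already been centred so that `g n 0` does not
tend to zero. -/
lemma compact_of_centered {α β lam : ℝ} (hα : 0 < α) (hβ : 0 < β) (hlam : 0 < lam)
    {f v g w : ℕ → ℝ → ℝ} (hf : ∀ n, WeakH1 (f n) (v n)) (hg : ∀ n, WeakH1 (g n) (w n))
    {B : ℝ} (hB : ∀ n, En α β (f n) (v n) (g n) (w n) ≤ B)
    (hN : Tendsto (fun n => ∫ x, f n x ^ 2 * g n x) atTop (𝓝 lam))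
    (hE : Tendsto (fun n => En α β (f n) (v n) (g n) (w n)) atTop (𝓝 (Mfun α β lam)))
    {c : ℝ} (hc : 0 < c) (hgc : ∀ᶠ n in atTop, c ≤ |g n 0|) :
    ∃ (nk : ℕ → ℕ) (φ V ψ W : ℝ → ℝ), StrictMono nk ∧ WeakH1 φ V ∧ WeakH1 ψ W ∧
      (∫ x, φ x ^ 2 * ψ x) = lam ∧ En α β φ V ψ W = Mfun α β lam ∧
      Tendsto (fun k => En α β (fun x => f (nk k) x - φ x) (fun x => v (nk k) x - V x)
        (fun x => g (nk k) x - ψ x) (fun x => w (nk k) x - W x)) atTop (𝓝 0) := by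
  have hM := Mfun_pos hα hβ hlam hf hg hN hE
  set M := Mfun α β lam with hMdef
  have hB0 : 0 ≤ B := (En_nonneg hα.le hβ.le _ _ _ _).trans (hB 0)
  set C : ℝ := B / α + B / β + B with hCdef
  have hBα : 0 ≤ B / α := by positivity
  have hBβ : 0 ≤ B / β := by positivity
  have hbd : ∀ n, ∫ x, f n x ^ 2 ≤ C ∧ ∫ x, v n x ^ 2 ≤ C ∧ ∫ x, g n x ^ 2 ≤ C ∧
      ∫ x, w n x ^ 2 ≤ C := by
    intro n
    obtain ⟨p1, p2, p3, p4⟩ := parts_le_En hα hβ (f n) (v n) (g n) (w n)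
    have q1 := div_le_div_of_nonneg_right (hB n) hα.le
    have q2 := div_le_div_of_nonneg_right (hB n) hβ.le
    have := hB n
    refine ⟨?_, ?_, ?_, ?_⟩ <;> linarith
  obtain ⟨n1, φ, V, hn1, hφ, hφl, hVw⟩ := exists_weak_limit hf (fun n => (hbd n).1)
    (fun n => (hbd n).2.1)
  obtain ⟨n2, ψ, W, hn2, hψ, hψl, hWw⟩ := exists_weak_limit (fun k => hg (n1 k))
    (fun k => (hbd (n1 k)).2.2.1) (fun k => (hbd (n1 k)).2.2.2)
  set nk : ℕ → ℕ := fun k => n1 (n2 k) with hnk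
  have hnkm : StrictMono nk := hn1.comp hn2
  have hf' := fun k => hf (nk k)
  have hg' := fun k => hg (nk k)
  have hfl : ∀ x, Tendsto (fun k => f (nk k) x) atTop (𝓝 (φ x)) :=
    fun x => (hφl x).comp hn2.tendsto_atTop
  have hVw' := (hVw V hφ.aesmv hφ.sqv).comp hn2.tendsto_atTop
  have hWw' := hWw W hψ.aesmv hψ.sqv
  set D : ℝ := 2 * C + 2 * ((∫ x, φ x ^ 2) + (∫ x, V x ^ 2) + (∫ x, ψ x ^ 2) + ∫ x, W x ^ 2)
    with hD
  have a1 := integral_sq_nonneg φ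
  have a2 := integral_sq_nonneg V
  have a3 := integral_sq_nonneg ψ
  have a4 := integral_sq_nonneg W
  have hD0 : 0 ≤ D := by positivity
  have b1 : ∀ k, ∫ x, (f (nk k) x - φ x) ^ 2 ≤ D := fun k => by
    have := integral_sub_sq_le (hf' k).aesm hφ.aesm (hf' k).sqf hφ.sqf
    linarith [(hbd (nk k)).1]
  have b2 : ∀ k, ∫ x, (v (nk k) x - V x) ^ 2 ≤ D := fun k => by
    have := integral_sub_sq_le (hf' k).aesmv hφ.aesmv (hf' k).sqv hφ.sqv
    linarith [(hbd (nk k)).2.1]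
  have b3 : ∀ k, ∫ x, (g (nk k) x - ψ x) ^ 2 ≤ D := fun k => by
    have := integral_sub_sq_le (hg' k).aesm hψ.aesm (hg' k).sqf hψ.sqf
    linarith [(hbd (nk k)).2.2.1]
  have b4 : ∀ k, ∫ x, (w (nk k) x - W x) ^ 2 ≤ D := fun k => by
    have := integral_sub_sq_le (hg' k).aesmv hψ.aesmv (hg' k).sqv hψ.sqv
    linarith [(hbd (nk k)).2.2.2]
  have s1 := sq_split (fun k => (hf' k).aesm) hφ.aesm (fun k => (hf' k).sqf) hφ.sqf
    (weak_of_pointwise hf' hφ b1 hfl)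
  have s2 := sq_split (fun k => (hf' k).aesmv) hφ.aesmv (fun k => (hf' k).sqv) hφ.sqv hVw'
  have s3 := sq_split (fun k => (hg' k).aesm) hψ.aesm (fun k => (hg' k).sqf) hψ.sqf
    (weak_of_pointwise hg' hψ b3 hψl)
  have s4 := sq_split (fun k => (hg' k).aesmv) hψ.aesmv (fun k => (hg' k).sqv) hψ.sqv hWw'
  have hEk := hE.comp hnkm.tendsto_atTop
  have hNk := hN.comp hnkm.tendsto_atTop
  set A := En α β φ V ψ W with hA
  set a := ∫ x, φ x ^ 2 * ψ x with ha
  have hrE : Tendsto (fun k => En α β (fun x => f (nk k) x - φ x) (fun x => v (nk k) x - V x)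
        (fun x => g (nk k) x - ψ x) (fun x => w (nk k) x - W x)) atTop (𝓝 (M - A)) := by
    have := hEk.sub (((s2.add s4).add (s1.const_mul α)).add (s3.const_mul β))
    refine this.congr fun k => ?_
    simp only [En, Function.comp_apply]
    ring
  have hrN : Tendsto (fun k => ∫ x, (f (nk k) x - φ x) ^ 2 * (g (nk k) x - ψ x)) atTop
      (𝓝 (lam - a)) := by
    have := hNk.sub (cubic_split hf' hg' hφ hψ hD0 b1 b2 b3 b4 hfl hψl)
    refine this.congr fun k => ?_
    simp only [Function.comp_apply]
    ring
  have hA0 : 0 ≤ A := En_nonneg hα.le hβ.le _ _ _ _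
  have hMA : 0 ≤ M - A := ge_of_tendsto' hrE fun k => En_nonneg hα.le hβ.le _ _ _ _
  have i1 : M ^ 3 * a ^ 2 ≤ lam ^ 2 * A ^ 3 := sharp_ineq hα hβ hlam hφ hψ
  have i2 : M ^ 3 * (lam - a) ^ 2 ≤ lam ^ 2 * (M - A) ^ 3 :=
    le_of_tendsto_of_tendsto' ((hrN.pow 2).const_mul _) ((hrE.pow 3).const_mul _)
      fun k => sharp_ineq hα hβ hlam ((hf' k).sub hφ) ((hg' k).sub hψ)
  have hψ0 : c ≤ |ψ 0| :=
    ge_of_tendsto (hψl 0).abs (hnkm.tendsto_atTop.eventually hgc)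
  rcases dichotomy_scalar hM hlam hA0 (by linarith) i1 i2 with h0 | ⟨h1, h2⟩
  · exfalso
    obtain ⟨-, -, p3, p4⟩ := parts_le_En hα hβ φ V ψ W
    rw [← hA, h0] at p3 p4
    rw [zero_div] at p3
    have h3 := hψ.sup_bound 0
    have h4 : 0 < ψ 0 ^ 2 := by
      rw [← sq_abs]; have := hc.trans_le hψ0; positivity
    linarith
  · refine ⟨nk, φ, V, ψ, W, hnkm, hφ, hψ, h2, h1, ?_⟩
    rwa [h1, sub_self] at hrE

/-! ### Minimizing sequences -/

lemma En_translate (α β : ℝ) (f v g w : ℝ → ℝ) (y : ℝ) :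
    En α β (fun x => f (x + y)) (fun x => v (x + y)) (fun x => g (x + y)) (fun x => w (x + y))
      = En α β f v g w := by
  unfold En
  rw [integral_add_right_eq_self (fun x => f x ^ 2) y,
    integral_add_right_eq_self (fun x => v x ^ 2) y,
    integral_add_right_eq_self (fun x => g x ^ 2) y,
    integral_add_right_eq_self (fun x => w x ^ 2) y]

lemma integral_sub_sq_congr {u v w : ℝ → ℝ} (h : v =ᵐ[volume] w) :
    ∫ x, (u x - v x) ^ 2 = ∫ x, (u x - w x) ^ 2 :=
  integral_congr_ae (h.mono fun x hx => by simp only [hx])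

/-- every minimizing sequence has a subsequence which, after suitable
translations, converges strongly in `H¹(ℝ) × H¹(ℝ)` to a minimizer `(φ, ψ)`. -/
theorem minimizing_seq_compact_up_to_translation (α₀ β₀ lam : ℝ)
    (hα : 0 < α₀) (hβ : 0 < β₀) (hlam : 0 < lam)
    (f g : ℕ → ℝ → ℝ) (hf : ∀ n, InH1 (f n)) (hg : ∀ n, InH1 (g n))
    (hconstr : Tendsto (fun n => ∫ x : ℝ, f n x ^ 2 * g n x) atTop (𝓝 lam))
    (hmin : Tendsto (fun n => Ifun α₀ β₀ (f n) (g n)) atTop (𝓝 (Mfun α₀ β₀ lam))) :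
    ∃ (nk : ℕ → ℕ) (y : ℕ → ℝ) (φ ψ : ℝ → ℝ), StrictMono nk ∧
      InH1 φ ∧ InH1 ψ ∧ (∫ x : ℝ, φ x ^ 2 * ψ x) = lam ∧
      Ifun α₀ β₀ φ ψ = Mfun α₀ β₀ lam ∧
      Tendsto (fun k => ∫ x : ℝ, (f (nk k) (x + y k) - φ x) ^ 2) atTop (𝓝 0) ∧
      Tendsto (fun k => ∫ x : ℝ, (deriv (f (nk k)) (x + y k) - deriv φ x) ^ 2) atTop (𝓝 0) ∧
      Tendsto (fun k => ∫ x : ℝ, (g (nk k) (x + y k) - ψ x) ^ 2) atTop (𝓝 0) ∧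
      Tendsto (fun k => ∫ x : ℝ, (deriv (g (nk k)) (x + y k) - deriv ψ x) ^ 2) atTop (𝓝 0) := by
  have hf0 := fun n => WeakH1.of_inH1 (hf n)
  have hg0 := fun n => WeakH1.of_inH1 (hg n)
  have hE : Tendsto (fun n => En α₀ β₀ (f n) (deriv (f n)) (g n) (deriv (g n))) atTop
      (𝓝 (Mfun α₀ β₀ lam)) := hmin.congr fun n => Ifun_eq_En (hf n) (hg n)
  obtain ⟨B, hB⟩ := hE.bddAbove_range
  have hB' : ∀ n, En α₀ β₀ (f n) (deriv (f n)) (g n) (deriv (g n)) ≤ B :=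
    fun n => hB ⟨n, rfl⟩
  obtain ⟨y, c, hc, hyc⟩ := exists_centers hα hβ hlam hf0 hB' hconstr
  have hN' : ∀ n, ∫ x, f n (x + y n) ^ 2 * g n (x + y n) = ∫ x, f n x ^ 2 * g n x :=
    fun n => integral_add_right_eq_self (fun x => f n x ^ 2 * g n x) (y n)
  have hM := Mfun_pos hα hβ hlam hf0 hg0 hconstr hE
  obtain ⟨nk, φ, V, ψ, W, hnk, hφ, hψ, hcub, hEφ, hlim⟩ :=
    compact_of_centered hα hβ hlam (f := fun n x => f n (x + y n))
      (v := fun n x => deriv (f n) (x + y n)) (g := fun n x => g n (x + y n))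
      (w := fun n x => deriv (g n) (x + y n))
      (fun n => (hf0 n).comp_add (y n)) (fun n => (hg0 n).comp_add (y n))
      (fun n => (En_translate _ _ _ _ _ _ _).trans_le (hB' n))
      (hconstr.congr fun n => (hN' n).symm)
      (hE.congr fun n => (En_translate _ _ _ _ _ _ _).symm) hc
      (hyc.mono fun n hn => by simpa using hn)
  obtain ⟨⟨rφ, dφ⟩, ⟨rψ, dψ⟩⟩ := minimizer_regular hα hβ hlam hφ hψ hM hEφ hcub
  have hparts := fun k => parts_le_En hα hβ (fun x => f (nk k) (x + y (nk k)) - φ x)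
    (fun x => deriv (f (nk k)) (x + y (nk k)) - V x)
    (fun x => g (nk k) (x + y (nk k)) - ψ x) (fun x => deriv (g (nk k)) (x + y (nk k)) - W x)
  refine ⟨nk, fun k => y (nk k), φ, ψ, hnk, rφ, rψ, hcub, ?_, ?_, ?_, ?_, ?_⟩
  · rw [Ifun_eq_En rφ rψ, ← hEφ]
    unfold En
    rw [integral_congr_ae (dφ.mono fun x hx => by simp only [hx] :
        (fun x => deriv φ x ^ 2) =ᵐ[volume] fun x => V x ^ 2),
      integral_congr_ae (dψ.mono fun x hx => by simp only [hx] :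
        (fun x => deriv ψ x ^ 2) =ᵐ[volume] fun x => W x ^ 2)]
  · exact squeeze_zero (fun k => integral_sq_nonneg _) (fun k => (hparts k).1)
      (by simpa using hlim.div_const α₀)
  · refine squeeze_zero (fun k => integral_sq_nonneg _) (fun k => ?_) hlim
    rw [integral_sub_sq_congr dφ]
    exact (hparts k).2.1
  · exact squeeze_zero (fun k => integral_sq_nonneg _) (fun k => (hparts k).2.2.1)
      (by simpa using hlim.div_const β₀)
  · refine squeeze_zero (fun k => integral_sq_nonneg _) (fun k => ?_) hlim
    rw [integral_sub_sq_congr dψ]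
    exact (hparts k).2.2.2
end
end

section
/- Let α₀ > 0, β₀ > 0 and λ > 0, and let (φ,ψ) ∈ H¹(ℝ)×H¹(ℝ) be a minimizer, i.e. ∫_ℝ φ² ψ dx = λ and I(φ,ψ) = M_λ. If φ and ψ are twice continuously differentiable, then there exists a Lagrange multiplier κ ∈ ℝ such that −φ″(x) + α₀ φ(x) = κ φ(x) ψ(x) and −ψ″(x) + β₀ ψ(x) = (κ/2) φ(x)² for all x ∈ ℝ. -/
/-!
The constrained problem is reduced to an unconstrained one by homogeneity: `I` is homogeneous of
degree 2 and `(f, g) ↦ ∫ f² g` of degree 3, so rescaling any pair with `c = ∫ f² g > 0` to an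
admissible one gives `I(φ, ψ) (c / λ)^(2/3) ≤ I(f, g)` (`min_le_of_scaling`). Along
`(φ + s η, ψ + s ζ)` with `C¹` compactly supported `η`, `ζ`, both `I` and `∫ f² g` are polynomials
in `s`, and the derivative at `s = 0` of the difference of the two sides vanishes. This is the weak
Euler–Lagrange system with the explicit multiplier `κ = 2 I(φ, ψ) / (3 λ)`
(`weak_euler_lagrange`). Integration by parts and the fundamental lemma of the calculus of
variations (`strong_of_weak`) then give the pointwise equations.
-/

open MeasureTheory Filter Topology

noncomputable section

lemma InH1.const_mul {f : ℝ → ℝ} (hf : InH1 f) (t : ℝ) : InH1 (fun x => t * f x) := by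
  obtain ⟨h1, h2, h3⟩ := hf
  refine ⟨h1.const_mul t, ?_, ?_⟩
  · simpa only [mul_pow] using h2.const_mul (t ^ 2)
  · simpa only [deriv_const_mul_field, mul_pow] using h3.const_mul (t ^ 2)

lemma Ifun_const_mul (α₀ β₀ t : ℝ) (f g : ℝ → ℝ) :
    Ifun α₀ β₀ (fun x => t * f x) (fun x => t * g x) = t ^ 2 * Ifun α₀ β₀ f g := by
  unfold Ifun
  rw [← integral_const_mul]
  congr 1
  ext x
  simp only [deriv_const_mul_field]
  ring

lemma Mfun_le {α₀ β₀ lam : ℝ} (hα : 0 < α₀) (hβ : 0 < β₀) {f g : ℝ → ℝ} (hf : InH1 f)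
    (hg : InH1 g) (h : (∫ x : ℝ, f x ^ 2 * g x) = lam) :
    Mfun α₀ β₀ lam ≤ Ifun α₀ β₀ f g := by
  refine csInf_le ⟨0, ?_⟩ ⟨f, g, hf, hg, h, rfl⟩
  rintro m ⟨u, v, -, -, -, rfl⟩
  exact integral_nonneg fun x => by positivity

/-- Rescaling `(f, g)` by `t = (λ / c)^(1/3)` makes it admissible for `M_λ`, whence a lower bound
on `I(f, g)` free of the constraint. -/
lemma min_le_of_scaling {α₀ β₀ lam c : ℝ} (hα : 0 < α₀) (hβ : 0 < β₀) (hlam : 0 < lam)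
    (hc : 0 < c) {f g : ℝ → ℝ} (hf : InH1 f) (hg : InH1 g)
    (h : (∫ x : ℝ, f x ^ 2 * g x) = c) :
    Mfun α₀ β₀ lam * (c / lam) ^ (2 / 3 : ℝ) ≤ Ifun α₀ β₀ f g := by
  have hq : 0 < c / lam := div_pos hc hlam
  set r : ℝ := (c / lam) ^ (1 / 3 : ℝ) with hr
  have hr0 : 0 < r := Real.rpow_pos_of_pos hq _
  have hr3 : r ^ 3 = c / lam := by
    rw [hr, ← Real.rpow_natCast, ← Real.rpow_mul hq.le]; norm_num
  have hr2 : (c / lam) ^ (2 / 3 : ℝ) = r ^ 2 := by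
    rw [hr, ← Real.rpow_natCast, ← Real.rpow_mul hq.le]; norm_num
  have key := Mfun_le (lam := lam) hα hβ (hf.const_mul r⁻¹) (hg.const_mul r⁻¹) (by
    have : ∀ x, (r⁻¹ * f x) ^ 2 * (r⁻¹ * g x) = (r ^ 3)⁻¹ * (f x ^ 2 * g x) := fun x => by
      rw [← inv_pow]; ring
    simp only [this]
    rw [integral_const_mul, h, hr3]
    field_simp)
  rw [Ifun_const_mul] at key
  rw [hr2]
  calc _ ≤ (r⁻¹ ^ 2 * Ifun α₀ β₀ f g) * r ^ 2 := by gcongr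
    _ = _ := by field_simp

lemma InH1.add_smul {f η : ℝ → ℝ} (hf : InH1 f) (hf' : Continuous (deriv f))
    (hη : ContDiff ℝ 1 η) (hc : HasCompactSupport η) (s : ℝ) :
    InH1 (fun x => f x + s * η x) := by
  obtain ⟨h1, h2, h3⟩ := hf
  have hfc := h1.continuous
  have hηc := hη.continuous
  have hη'c : Continuous (deriv η) := hη.continuous_deriv le_rfl
  have hηd : Differentiable ℝ η := hη.differentiable one_ne_zero
  have expand : ∀ u v : ℝ → ℝ, Continuous u → Continuous v → HasCompactSupport v →
      Integrable (fun x => u x ^ 2) → Integrable (fun x => (u x + s * v x) ^ 2) := by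
    intro u v hu hv hvc hi
    have h : Integrable (fun x => (2 * s * u x + s ^ 2 * v x) * v x) :=
      Continuous.integrable_of_hasCompactSupport (by fun_prop) hvc.mul_left
    refine (hi.add h).congr (ae_of_all _ fun x => ?_)
    simp only [Pi.add_apply]
    ring
  refine ⟨h1.add (hηd.const_mul s), expand _ _ hfc hηc hc h2, ?_⟩
  have hd : deriv (fun x => f x + s * η x) = fun x => deriv f x + s * deriv η x := by
    ext x
    rw [deriv_fun_add (h1 x) ((hηd x).const_mul s), deriv_const_mul_field]
  rw [hd]
  exact expand _ _ hf' hη'c hc.deriv h3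

/-- The weak form of the Euler–Lagrange system, both equations tested at once. The multiplier
`2 I(φ, ψ) / (3 λ)` comes from differentiating `(c / λ)^(2/3)`. -/
lemma weak_euler_lagrange {α₀ β₀ lam : ℝ}
    (hα : 0 < α₀) (hβ : 0 < β₀) (hlam : 0 < lam)
    {φ ψ : ℝ → ℝ} (hφ : InH1 φ) (hψ : InH1 ψ)
    (hconstr : (∫ x : ℝ, φ x ^ 2 * ψ x) = lam)
    (hmin : Ifun α₀ β₀ φ ψ = Mfun α₀ β₀ lam)
    (hφ' : Continuous (deriv φ)) (hψ' : Continuous (deriv ψ))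
    {η ζ : ℝ → ℝ} (hη : ContDiff ℝ 1 η) (hηs : HasCompactSupport η)
    (hζ : ContDiff ℝ 1 ζ) (hζs : HasCompactSupport ζ) :
    (∫ x, 2 * ((deriv φ x * deriv η x + α₀ * φ x * η x) +
        (deriv ψ x * deriv ζ x + β₀ * ψ x * ζ x))) =
      (2 * Ifun α₀ β₀ φ ψ / (3 * lam)) *
        ∫ x, (2 * (φ x * ψ x) * η x + φ x ^ 2 * ζ x) := by
  have cφ := hφ.1.continuous
  have cψ := hψ.1.continuous
  have cη := hη.continuous
  have cζ := hζ.continuous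
  have cη' : Continuous (deriv η) := hη.continuous_deriv le_rfl
  have cζ' : Continuous (deriv ζ) := hζ.continuous_deriv le_rfl
  have dη : Differentiable ℝ η := hη.differentiable one_ne_zero
  have dζ : Differentiable ℝ ζ := hζ.differentiable one_ne_zero
  have intη : ∀ w : ℝ → ℝ, Continuous w → Integrable (fun x => w x * η x) := fun w hw =>
    (hw.mul cη).integrable_of_hasCompactSupport hηs.mul_left
  have intζ : ∀ w : ℝ → ℝ, Continuous w → Integrable (fun x => w x * ζ x) := fun w hw =>
    (hw.mul cζ).integrable_of_hasCompactSupport hζs.mul_left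
  have intη' : ∀ w : ℝ → ℝ, Continuous w → Integrable (fun x => w x * deriv η x) := fun w hw =>
    (hw.mul cη').integrable_of_hasCompactSupport hηs.deriv.mul_left
  have intζ' : ∀ w : ℝ → ℝ, Continuous w → Integrable (fun x => w x * deriv ζ x) := fun w hw =>
    (hw.mul cζ').integrable_of_hasCompactSupport hζs.deriv.mul_left
  set J1 := ∫ x, 2 * ((deriv φ x * deriv η x + α₀ * φ x * η x) +
        (deriv ψ x * deriv ζ x + β₀ * ψ x * ζ x)) with hJ1
  set C1 := ∫ x, (2 * (φ x * ψ x) * η x + φ x ^ 2 * ζ x) with hC1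
  set J0 := Ifun α₀ β₀ φ ψ with hJ0
  -- A non-integrable `φ² ψ` would have integral `0`, against `λ > 0`.
  have hint : Integrable (fun x => φ x ^ 2 * ψ x) := by
    by_contra hn
    rw [integral_undef hn] at hconstr
    exact hlam.ne hconstr
  obtain ⟨J2, hJ⟩ : ∃ J2, ∀ s, Ifun α₀ β₀ (fun x => φ x + s * η x) (fun x => ψ x + s * ζ x) =
      J0 + s * J1 + s ^ 2 * J2 := by
    refine ⟨∫ x, (deriv η x * deriv η x + deriv ζ x * deriv ζ x + α₀ * η x * η x
      + β₀ * ζ x * ζ x), fun s => ?_⟩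
    have i0 : Integrable
        (fun x => deriv φ x ^ 2 + deriv ψ x ^ 2 + α₀ * φ x ^ 2 + β₀ * ψ x ^ 2) :=
      ((hφ.2.2.add hψ.2.2).add (hφ.2.1.const_mul α₀)).add (hψ.2.1.const_mul β₀)
    have i1 : Integrable (fun x => 2 * ((deriv φ x * deriv η x + α₀ * φ x * η x) +
        (deriv ψ x * deriv ζ x + β₀ * ψ x * ζ x))) :=
      (((intη' _ hφ').add (intη (fun x => α₀ * φ x) (by fun_prop))).add
        ((intζ' _ hψ').add (intζ (fun x => β₀ * ψ x) (by fun_prop)))).const_mul 2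
    have i2 : Integrable (fun x => deriv η x * deriv η x + deriv ζ x * deriv ζ x
        + α₀ * η x * η x + β₀ * ζ x * ζ x) :=
      (((intη' _ cη').add (intζ' _ cζ')).add (intη (fun x => α₀ * η x) (by fun_prop))).add
        (intζ (fun x => β₀ * ζ x) (by fun_prop))
    rw [hJ0, hJ1, Ifun, Ifun, ← integral_const_mul, ← integral_const_mul,
      ← integral_add i0 (i1.const_mul s),
      ← integral_add (i0.fun_add (i1.const_mul s)) (i2.const_mul _)]
    congr 1
    ext x
    rw [deriv_fun_add (hφ.1 x) ((dη x).const_mul s), deriv_const_mul_field,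
      deriv_fun_add (hψ.1 x) ((dζ x).const_mul s), deriv_const_mul_field]
    ring
  obtain ⟨C2, C3, hC⟩ : ∃ C2 C3, ∀ s, (∫ x, (φ x + s * η x) ^ 2 * (ψ x + s * ζ x)) =
      lam + s * C1 + s ^ 2 * C2 + s ^ 3 * C3 := by
    refine ⟨∫ x, (η x * ψ x * η x + 2 * φ x * η x * ζ x), ∫ x, η x ^ 2 * ζ x, fun s => ?_⟩
    have i1 : Integrable (fun x => 2 * (φ x * ψ x) * η x + φ x ^ 2 * ζ x) :=
      (intη (fun x => 2 * (φ x * ψ x)) (by fun_prop)).add (intζ (fun x => φ x ^ 2) (by fun_prop))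
    have i2 : Integrable (fun x => η x * ψ x * η x + 2 * φ x * η x * ζ x) :=
      (intη (fun x => η x * ψ x) (by fun_prop)).add
        (intζ (fun x => 2 * φ x * η x) (by fun_prop))
    have i3 : Integrable (fun x => η x ^ 2 * ζ x) := intζ (fun x => η x ^ 2) (by fun_prop)
    rw [hC1, ← hconstr, ← integral_const_mul, ← integral_const_mul, ← integral_const_mul,
      ← integral_add hint (i1.const_mul s),
      ← integral_add (hint.fun_add (i1.const_mul s)) (i2.const_mul _),
      ← integral_add ((hint.fun_add (i1.const_mul s)).fun_add (i2.const_mul _)) (i3.const_mul _)]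
    congr 1
    ext x
    ring
  have dJ : HasDerivAt (fun s : ℝ => J0 + s * J1 + s ^ 2 * J2) J1 0 := by
    have := (((hasDerivAt_id (0 : ℝ)).mul_const J1).const_add J0).fun_add
      (((hasDerivAt_id (0 : ℝ)).pow 2).mul_const J2)
    simpa using this
  have dC : HasDerivAt (fun s : ℝ => lam + s * C1 + s ^ 2 * C2 + s ^ 3 * C3) C1 0 := by
    have := ((((hasDerivAt_id (0 : ℝ)).mul_const C1).const_add lam).fun_add
      (((hasDerivAt_id (0 : ℝ)).pow 2).mul_const C2)).fun_add
      (((hasDerivAt_id (0 : ℝ)).pow 3).mul_const C3)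
    simpa using this
  have dP : HasDerivAt (fun s : ℝ =>
      ((lam + s * C1 + s ^ 2 * C2 + s ^ 3 * C3) / lam) ^ (2 / 3 : ℝ)) (C1 / lam * (2 / 3)) 0 := by
    have := (dC.div_const lam).rpow_const (p := 2 / 3) (Or.inl (by simp [hlam.ne']))
    simpa [hlam.ne'] using this
  have hpos : ∀ᶠ s in 𝓝 (0 : ℝ), 0 < lam + s * C1 + s ^ 2 * C2 + s ^ 3 * C3 :=
    dC.continuousAt.eventually (lt_mem_nhds (by simpa using hlam))
  have hloc : IsLocalMin (fun s : ℝ => (J0 + s * J1 + s ^ 2 * J2) -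
      J0 * ((lam + s * C1 + s ^ 2 * C2 + s ^ 3 * C3) / lam) ^ (2 / 3 : ℝ)) 0 := by
    filter_upwards [hpos] with s hs
    have h := min_le_of_scaling hα hβ hlam hs (hφ.add_smul hφ' hη hηs s)
      (hψ.add_smul hψ' hζ hζs s) (hC s)
    rw [hJ s, ← hmin] at h
    simpa [hlam.ne'] using h
  have hz := hloc.hasDerivAt_eq_zero (dJ.sub (dP.const_mul J0))
  have : J1 = J0 * (C1 / lam * (2 / 3)) := by linarith
  rw [this]
  field_simp

/-- A `C²` function `u` satisfying `-u'' + w = 0` weakly satisfies it pointwise. -/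
lemma strong_of_weak {u w : ℝ → ℝ} (hu : ContDiff ℝ 2 u) (hw : Continuous w)
    (h : ∀ η : ℝ → ℝ, ContDiff ℝ 1 η → HasCompactSupport η →
      (∫ x, (deriv u x * deriv η x + w x * η x)) = 0) (x : ℝ) :
    -(deriv (deriv u) x) + w x = 0 := by
  have hu' : ContDiff ℝ 1 (deriv u) := by
    have : ContDiff ℝ (1 + 1) u := by simpa [one_add_one_eq_two] using hu
    exact (contDiff_succ_iff_deriv.1 this).2.2
  have hu'c : Continuous (deriv u) := hu'.continuous
  have hu''c : Continuous (deriv (deriv u)) := hu'.continuous_deriv le_rfl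
  have hcont : Continuous (fun x => -(deriv (deriv u) x) + w x) := by fun_prop
  have hae : ∀ᵐ x, -(deriv (deriv u) x) + w x = 0 := by
    refine ae_eq_zero_of_integral_contDiff_smul_eq_zero hcont.locallyIntegrable ?_
    intro η hη hηs
    have hη1 : ContDiff ℝ 1 η := hη.of_le (by exact_mod_cast le_top)
    have cη := hη1.continuous
    have cη' : Continuous (deriv η) := hη1.continuous_deriv le_rfl
    have i1 : Integrable (fun x => deriv u x * deriv η x) :=
      (hu'c.mul cη').integrable_of_hasCompactSupport hηs.deriv.mul_left
    have i2 : Integrable (fun x => deriv (deriv u) x * η x) :=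
      (hu''c.mul cη).integrable_of_hasCompactSupport hηs.mul_left
    have i3 : Integrable (fun x => deriv u x * η x) :=
      (hu'c.mul cη).integrable_of_hasCompactSupport hηs.mul_left
    have i4 : Integrable (fun x => w x * η x) :=
      (hw.mul cη).integrable_of_hasCompactSupport hηs.mul_left
    have ibp := integral_mul_deriv_eq_deriv_mul_of_integrable
      (fun x _ => (hu'.differentiable one_ne_zero x).hasDerivAt)
      (fun x _ => (hη1.differentiable one_ne_zero x).hasDerivAt) i1 i2 i3
    have h0 := h η hη1 hηs
    rw [integral_add i1 i4, ibp, ← integral_neg, ← integral_add i2.fun_neg i4] at h0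
    rw [← h0]
    congr 1
    ext x
    simp only [smul_eq_mul]
    ring
  have := (Continuous.ae_eq_iff_eq (μ := (volume : Measure ℝ)) hcont
    (continuous_const (y := (0 : ℝ)))).1 hae
  exact congrFun this x

/-- a twice continuously differentiable minimizer satisfies the
Euler–Lagrange system for some Lagrange multiplier `κ`. -/
theorem minimizer_euler_lagrange (α₀ β₀ lam : ℝ)
    (hα : 0 < α₀) (hβ : 0 < β₀) (hlam : 0 < lam)
    (φ ψ : ℝ → ℝ) (hφ : InH1 φ) (hψ : InH1 ψ)
    (hconstr : (∫ x : ℝ, φ x ^ 2 * ψ x) = lam)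
    (hmin : Ifun α₀ β₀ φ ψ = Mfun α₀ β₀ lam)
    (hφC2 : ContDiff ℝ 2 φ) (hψC2 : ContDiff ℝ 2 ψ) :
    ∃ κ : ℝ, ∀ x : ℝ,
      -(deriv (deriv φ) x) + α₀ * φ x = κ * (φ x * ψ x) ∧
      -(deriv (deriv ψ) x) + β₀ * ψ x = (κ / 2) * φ x ^ 2 := by
  have cφ := hφ.1.continuous
  have cψ := hψ.1.continuous
  have cφ' : Continuous (deriv φ) := hφC2.continuous_deriv (by norm_num)
  have cψ' : Continuous (deriv ψ) := hψC2.continuous_deriv (by norm_num)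
  have weak := fun (η ζ : ℝ → ℝ) (h1 : ContDiff ℝ 1 η) (h2 : HasCompactSupport η)
    (h3 : ContDiff ℝ 1 ζ) (h4 : HasCompactSupport ζ) =>
    weak_euler_lagrange hα hβ hlam hφ hψ hconstr hmin cφ' cψ' h1 h2 h3 h4
  set κ := 2 * Ifun α₀ β₀ φ ψ / (3 * lam) with hκ
  have zero_smooth : ContDiff ℝ 1 (fun _ : ℝ => (0 : ℝ)) := contDiff_const
  have zero_supp : HasCompactSupport (fun _ : ℝ => (0 : ℝ)) := HasCompactSupport.zero
  refine ⟨κ, fun x => ⟨?_, ?_⟩⟩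
  · have := strong_of_weak (w := fun x => α₀ * φ x - κ * (φ x * ψ x)) hφC2 (by fun_prop) (by
      intro η hη hηs
      have h := weak η (fun _ => 0) hη hηs zero_smooth zero_supp
      simp only [deriv_const', mul_zero, add_zero] at h
      have cη := hη.continuous
      have cη' : Continuous (deriv η) := hη.continuous_deriv le_rfl
      have i1 : Integrable (fun x => 2 * (deriv φ x * deriv η x + α₀ * φ x * η x)) :=
        (((cφ'.mul cη').integrable_of_hasCompactSupport hηs.deriv.mul_left).add
          (((cφ.const_mul α₀).mul cη).integrable_of_hasCompactSupport hηs.mul_left)).const_mul 2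
      have i2 : Integrable (fun x => 2 * (φ x * ψ x) * η x) :=
        Continuous.integrable_of_hasCompactSupport (by fun_prop) hηs.mul_left
      have hs : (∫ x, (1 / 2 : ℝ) * (2 * (deriv φ x * deriv η x + α₀ * φ x * η x)
          - κ * (2 * (φ x * ψ x) * η x))) = 0 := by
        rw [integral_const_mul, integral_sub i1 (i2.const_mul κ), integral_const_mul κ, h]
        ring
      rw [← hs]
      congr 1
      ext x
      ring) x
    linarith
  · have := strong_of_weak (w := fun x => β₀ * ψ x - κ / 2 * φ x ^ 2) hψC2 (by fun_prop) (by
      intro ζ hζ hζs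
      have h := weak (fun _ => 0) ζ zero_smooth zero_supp hζ hζs
      simp only [deriv_const', mul_zero, zero_add] at h
      have cζ := hζ.continuous
      have cζ' : Continuous (deriv ζ) := hζ.continuous_deriv le_rfl
      have i1 : Integrable (fun x => 2 * (deriv ψ x * deriv ζ x + β₀ * ψ x * ζ x)) :=
        (((cψ'.mul cζ').integrable_of_hasCompactSupport hζs.deriv.mul_left).add
          (((cψ.const_mul β₀).mul cζ).integrable_of_hasCompactSupport hζs.mul_left)).const_mul 2
      have i2 : Integrable (fun x => φ x ^ 2 * ζ x) :=
        Continuous.integrable_of_hasCompactSupport (by fun_prop) hζs.mul_left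
      have hs : (∫ x, (1 / 2 : ℝ) * (2 * (deriv ψ x * deriv ζ x + β₀ * ψ x * ζ x)
          - κ * (φ x ^ 2 * ζ x))) = 0 := by
        rw [integral_const_mul, integral_sub i1 (i2.const_mul κ), integral_const_mul κ, h]
        ring
      rw [← hs]
      congr 1
      ext x
      ring) x
    linarith
end
end

section
/- Let α₀ > 0, β₀ > 0 and λ > 0. Suppose (φ,ψ) ∈ H¹(ℝ)×H¹(ℝ) are twice continuously differentiable with φ(x), φ′(x), ψ(x), ψ′(x) → 0 as |x| → ∞, satisfy ∫_ℝ φ² ψ dx = λ and I(φ,ψ) = M_λ, and satisfy the Euler–Lagrange system −φ″ + α₀ φ = κ φ ψ, −ψ″ + β₀ ψ = (κ/2) φ² for some κ ∈ ℝ. Then κ = 2 M_λ / (3λ); in particular κ > 0. -/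
/-!
Pairing the first Euler–Lagrange equation with `φ` and the second with `ψ`, and integrating by
parts on the line (`energy_identity`), gives
`∫ (φ'² + α₀ φ²) = κ λ` and `∫ (ψ'² + β₀ ψ²) = (κ / 2) λ`.
Adding the two yields `M_λ = I(φ,ψ) = (3 / 2) κ λ`. For the sign, `κ λ ≥ α₀ ∫ φ²`, and `∫ φ² > 0`
since otherwise `φ = 0` almost everywhere and the constraint integral would vanish.
The cubic term `φ² ψ` is integrable because its Bochner integral `λ` is nonzero.
-/

open MeasureTheory Filter Topology

noncomputable section

/-- Integrated form of `-u'' u + c u² = h`. The boundary term `u u'` vanishes at `±∞`, and the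
equation itself shows that `u u''` is integrable. -/
lemma energy_identity (u h : ℝ → ℝ) (c : ℝ) (hu : InH1 u) (huC2 : ContDiff ℝ 2 u)
    (hu0 : Tendsto u (cocompact ℝ) (𝓝 0)) (hu'0 : Tendsto (deriv u) (cocompact ℝ) (𝓝 0))
    (hh : Integrable h) (heq : ∀ x, -(deriv (deriv u) x) * u x + c * u x ^ 2 = h x) :
    (∫ x, (deriv u x ^ 2 + c * u x ^ 2)) = ∫ x, h x := by
  obtain ⟨hd, hi, hi'⟩ := hu
  have hd' : Differentiable ℝ (deriv u) :=
    (huC2.iterate_deriv' 1 1).differentiable (by norm_num)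
  have hder : ∀ x, HasDerivAt (fun y => u y * deriv u y)
      ((deriv u x ^ 2 + c * u x ^ 2) - h x) x := by
    intro x
    have he : (deriv u x ^ 2 + c * u x ^ 2) - h x
        = deriv u x * deriv u x + u x * deriv (deriv u) x := by
      rw [← heq x]
      ring
    rw [he]
    exact (hd x).hasDerivAt.mul (hd' x).hasDerivAt
  have hint : Integrable (fun x => deriv u x ^ 2 + c * u x ^ 2) := hi'.add (hi.const_mul c)
  have hlim : Tendsto (fun y => u y * deriv u y) (cocompact ℝ) (𝓝 0) := by
    simpa using hu0.mul hu'0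
  rw [cocompact_eq_atBot_atTop, tendsto_sup] at hlim
  have key := integral_of_hasDerivAt_of_tendsto hder (hint.sub hh) hlim.1 hlim.2
  rw [integral_sub hint hh] at key
  linarith

/-- for a decaying C² minimizer satisfying the Euler–Lagrange system
with multiplier `κ`, the multiplier equals `2 M_λ / (3λ)`; in particular `κ > 0`. -/
theorem lagrange_multiplier_value (α₀ β₀ lam : ℝ)
    (hα : 0 < α₀) (hβ : 0 < β₀) (hlam : 0 < lam)
    (φ ψ : ℝ → ℝ) (hφ : InH1 φ) (hψ : InH1 ψ)
    (hφC2 : ContDiff ℝ 2 φ) (hψC2 : ContDiff ℝ 2 ψ)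
    (hφ0 : Tendsto φ (cocompact ℝ) (𝓝 0)) (hφ'0 : Tendsto (deriv φ) (cocompact ℝ) (𝓝 0))
    (hψ0 : Tendsto ψ (cocompact ℝ) (𝓝 0)) (hψ'0 : Tendsto (deriv ψ) (cocompact ℝ) (𝓝 0))
    (hconstr : (∫ x : ℝ, φ x ^ 2 * ψ x) = lam)
    (hmin : Ifun α₀ β₀ φ ψ = Mfun α₀ β₀ lam)
    (κ : ℝ)
    (hEL1 : ∀ x : ℝ, -(deriv (deriv φ) x) + α₀ * φ x = κ * (φ x * ψ x))
    (hEL2 : ∀ x : ℝ, -(deriv (deriv ψ) x) + β₀ * ψ x = (κ / 2) * φ x ^ 2) :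
    κ = 2 * Mfun α₀ β₀ lam / (3 * lam) ∧ 0 < κ := by
  have hcub : Integrable (fun x => φ x ^ 2 * ψ x) := by
    by_contra hn
    rw [integral_undef hn] at hconstr
    exact hlam.ne hconstr
  have e1 : (∫ x, (deriv φ x ^ 2 + α₀ * φ x ^ 2)) = κ * lam := by
    rw [energy_identity φ (fun x => κ * (φ x ^ 2 * ψ x)) α₀ hφ hφC2 hφ0 hφ'0 (hcub.const_mul κ)
      (fun x => by linear_combination φ x * hEL1 x), integral_const_mul, hconstr]
  have e2 : (∫ x, (deriv ψ x ^ 2 + β₀ * ψ x ^ 2)) = κ / 2 * lam := by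
    rw [energy_identity ψ (fun x => κ / 2 * (φ x ^ 2 * ψ x)) β₀ hψ hψC2 hψ0 hψ'0
      (hcub.const_mul (κ / 2)) (fun x => by linear_combination ψ x * hEL2 x),
      integral_const_mul, hconstr]
  obtain ⟨-, hφi, hφi'⟩ := hφ
  obtain ⟨-, hψi, hψi'⟩ := hψ
  have hI : Ifun α₀ β₀ φ ψ = κ * lam + κ / 2 * lam := by
    have h1 : Integrable (fun x => deriv φ x ^ 2 + α₀ * φ x ^ 2) := hφi'.add (hφi.const_mul α₀)
    have h2 : Integrable (fun x => deriv ψ x ^ 2 + β₀ * ψ x ^ 2) := hψi'.add (hψi.const_mul β₀)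
    rw [← e1, ← e2, ← integral_add h1 h2]
    exact integral_congr_ae (Eventually.of_forall fun x => by ring)
  have hpos : 0 < ∫ x, φ x ^ 2 := by
    refine lt_of_le_of_ne (integral_nonneg fun x => sq_nonneg _) fun h0 => ?_
    have hae := (integral_eq_zero_iff_of_nonneg (fun x => sq_nonneg (φ x)) hφi).1 h0.symm
    have hz : (∫ x, φ x ^ 2 * ψ x) = 0 := by
      refine integral_eq_zero_of_ae ?_
      filter_upwards [hae] with x hx
      have hx' : φ x ^ 2 = 0 := hx
      simp [hx']
    linarith
  have hκ : 0 < κ * lam := by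
    rw [integral_add hφi' (hφi.const_mul α₀), integral_const_mul] at e1
    have h1 : 0 ≤ ∫ x, deriv φ x ^ 2 := integral_nonneg fun x => sq_nonneg _
    have h2 := mul_pos hα hpos
    linarith
  refine ⟨?_, pos_of_mul_pos_left hκ hlam.le⟩
  rw [← hmin, hI]
  field_simp
  ring
end
end
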